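/- Let G = A₁ ∗_C A₋₁ be a word hyperbolic group which is the amalgamated free product of A₁ and A₋₁ along a virtually cyclic subgroup C, and let H be a finitely generated subgroup of G such that for every g ∈ G and every i ∈ {1, −1} the subgroup g⁻¹Hg ∩ Aᵢ is quasiconvex in Aᵢ. Then H is word hyperbolic. -/

import Mathlib

universe u v w

section Defs

variable {G : Type u} [Group G]

/-- A finite generating set closed under inversion. -/
def IsSymmGen (X : Set G) : Prop :=
  X.Finite ∧ (∀ x ∈ X, x⁻¹ ∈ X) ∧ Subgroup.closure X = ⊤

/-- Word length of `g` with respect to `X`. -/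
noncomputable def wordLength (X : Set G) (g : G) : ℕ :=
  sInf {n : ℕ | ∃ l : List G, l.length = n ∧ (∀ x ∈ l, x ∈ X) ∧ l.prod = g}

/-- Word metric. -/
noncomputable def wordDist (X : Set G) (g h : G) : ℕ :=
  wordLength X (g⁻¹ * h)

/-- Gromov product with respect to the word metric. -/
noncomputable def gromovProd (X : Set G) (x y w : G) : ℝ :=
  ((wordDist X x w : ℝ) + (wordDist X y w : ℝ) - (wordDist X x y : ℝ)) / 2

end Defs

/-- A group is word hyperbolic if for some finite symmetric generating set the Gromov
product satisfies the hyperbolicity inequality. -/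
def IsWordHyperbolic (G : Type u) [Group G] : Prop :=
  ∃ X : Set G, IsSymmGen X ∧ ∃ δ : ℝ, 0 ≤ δ ∧
    ∀ x y z w : G,
      gromovProd X x z w ≥ min (gromovProd X x y w) (gromovProd X y z w) - δ

/-- A subgroup is quasiconvex: it is finitely generated and word lengths distort linearly. -/
def IsQuasiconvex {G : Type u} [Group G] (A : Subgroup G) : Prop :=
  ∃ Y : Set ↥A, IsSymmGen Y ∧ ∃ X : Set G, IsSymmGen X ∧ ∃ c : ℝ, 0 < c ∧
    ∀ a : ↥A, (wordLength Y a : ℝ) ≤ c * (wordLength X (a : G) : ℝ) + c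

/-- Property (Q): every finitely generated subgroup is quasiconvex. -/
def HasPropertyQ (G : Type u) [Group G] : Prop :=
  ∀ H : Subgroup G, H.FG → IsQuasiconvex H

/-- A group is virtually cyclic if it has a cyclic subgroup of finite index. -/
def IsVirtuallyCyclic (C : Type u) [Group C] : Prop :=
  ∃ Z : Subgroup C, IsCyclic ↥Z ∧ Z.FiniteIndex

/-- `G` is the amalgamated free product of its subgroups `A` and `B` along `C`:
`C = A ⊓ B`, `A ⊔ B = ⊤` and `G` has the pushout universal property. -/
structure IsAmalgamatedFreeProduct {G : Type u} [Group G] (A B C : Subgroup G) : Prop where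
  le_left : C ≤ A
  le_right : C ≤ B
  inf_eq : A ⊓ B = C
  sup_eq_top : A ⊔ B = ⊤
  univ : ∀ (K : Type u) [Group K] (f : ↥A →* K) (g : ↥B →* K),
    (∀ (c : G) (hA : c ∈ A) (hB : c ∈ B), f ⟨c, hA⟩ = g ⟨c, hB⟩) →
    ∃ h : G →* K, (∀ a : ↥A, h a = f a) ∧ (∀ b : ↥B, h b = g b)

section Words

variable {G : Type u} [Group G]

/-- A word over the alphabet `X`. -/
def IsWordOver (X : Set G) (l : List G) : Prop := ∀ x ∈ l, x ∈ X

/-- A geodesic word over `X`. -/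
def IsGeodesicWord (X : Set G) (l : List G) : Prop :=
  IsWordOver X l ∧ l.length = wordLength X l.prod

/-- A `lam`-quasigeodesic word over `X`: every subword `v` satisfies
`l(v) ≤ lam * l_X(v̄) + lam`. -/
def IsQuasigeodesicWord (X : Set G) (lam : ℝ) (l : List G) : Prop :=
  IsWordOver X l ∧
    ∀ v : List G, v <:+: l → (v.length : ℝ) ≤ lam * (wordLength X v.prod : ℝ) + lam

/-- `g` is a shortest element of the subset `S` with respect to `wordLength X`. -/
def ShortestIn (X : Set G) (g : G) (S : Set G) : Prop :=
  g ∈ S ∧ ∀ s ∈ S, wordLength X g ≤ wordLength X s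

end Words

/-- `G` together with `ια, ιβ` is the pushout of `ℤ → A, 1 ↦ x` and `ℤ → B, 1 ↦ y`. -/
structure IsAmalgamOverZ {A : Type u} {B : Type v} {G : Type w}
    [Group A] [Group B] [Group G]
    (ια : A →* G) (ιβ : B →* G) (x : A) (y : B) : Prop where
  comm : ια x = ιβ y
  gen : ια.range ⊔ ιβ.range = ⊤
  univ : ∀ (K : Type (max u v w)) [Group K] (f : A →* K) (g : B →* K),
    f x = g y → ∃ h : G →* K, h.comp ια = f ∧ h.comp ιβ = g

section WordMetric

variable {G : Type*} [Group G] {X : Set G}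

theorem wordLength_prod_le {l : List G} (hl : ∀ x ∈ l, x ∈ X) :
    wordLength X l.prod ≤ l.length :=
  Nat.sInf_le ⟨l, rfl, hl, rfl⟩

theorem IsSymmGen.exists_list (hX : IsSymmGen X) (g : G) :
    ∃ l : List G, (∀ x ∈ l, x ∈ X) ∧ l.prod = g := by
  have hg : g ∈ Subgroup.closure X := hX.2.2 ▸ Subgroup.mem_top g
  induction hg using Subgroup.closure_induction with
  | mem x hx => exact ⟨[x], by simpa using hx, by simp⟩
  | one => exact ⟨[], by simp, by simp⟩
  | mul x y _ _ hx hy =>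
    obtain ⟨l, hl, rfl⟩ := hx
    obtain ⟨m, hm, rfl⟩ := hy
    refine ⟨l ++ m, fun x hx => ?_, by simp⟩
    rcases List.mem_append.1 hx with h | h
    exacts [hl x h, hm x h]
  | inv x _ hx =>
    obtain ⟨l, hl, rfl⟩ := hx
    refine ⟨(l.map (·⁻¹)).reverse, fun x hx => ?_, (List.prod_inv_reverse l).symm⟩
    simp only [List.mem_reverse, List.mem_map] at hx
    obtain ⟨y, hy, rfl⟩ := hx
    exact hX.2.1 y (hl y hy)

theorem IsSymmGen.exists_geodesic_list (hX : IsSymmGen X) (g : G) :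
    ∃ l : List G, l.length = wordLength X g ∧ (∀ x ∈ l, x ∈ X) ∧ l.prod = g := by
  obtain ⟨l, hl, hg⟩ := hX.exists_list g
  exact Nat.sInf_mem
    (s := {n : ℕ | ∃ l : List G, l.length = n ∧ (∀ x ∈ l, x ∈ X) ∧ l.prod = g}) ⟨_, l, rfl, hl, hg⟩

@[simp]
theorem wordLength_one : wordLength X (1 : G) = 0 := by
  simpa using wordLength_prod_le (X := X) (l := []) (by simp)

theorem IsSymmGen.wordLength_mul_le (hX : IsSymmGen X) (g h : G) :
    wordLength X (g * h) ≤ wordLength X g + wordLength X h := by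
  obtain ⟨l, hl, hl', rfl⟩ := hX.exists_geodesic_list g
  obtain ⟨m, hm, hm', rfl⟩ := hX.exists_geodesic_list h
  rw [← hl, ← hm, ← List.prod_append, ← List.length_append]
  refine wordLength_prod_le fun x hx => ?_
  rcases List.mem_append.1 hx with h | h
  exacts [hl' x h, hm' x h]

theorem IsSymmGen.wordLength_inv_le (hX : IsSymmGen X) (g : G) :
    wordLength X g⁻¹ ≤ wordLength X g := by
  obtain ⟨l, hl, hl', rfl⟩ := hX.exists_geodesic_list g
  rw [← hl, List.prod_inv_reverse]
  refine (wordLength_prod_le fun x hx => ?_).trans (by simp)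
  simp only [List.mem_reverse, List.mem_map] at hx
  obtain ⟨y, hy, rfl⟩ := hx
  exact hX.2.1 y (hl' y hy)

theorem IsSymmGen.wordLength_inv (hX : IsSymmGen X) (g : G) :
    wordLength X g⁻¹ = wordLength X g :=
  (hX.wordLength_inv_le g).antisymm (by simpa using hX.wordLength_inv_le g⁻¹)

theorem IsSymmGen.eq_one_of_wordLength_eq_zero (hX : IsSymmGen X) {g : G}
    (hg : wordLength X g = 0) : g = 1 := by
  obtain ⟨l, hl, -, rfl⟩ := hX.exists_geodesic_list g
  rw [hg, List.length_eq_zero_iff] at hl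
  simp [hl]

theorem IsSymmGen.mem_of_wordLength_eq_one (hX : IsSymmGen X) {g : G}
    (hg : wordLength X g = 1) : g ∈ X := by
  obtain ⟨l, hl, hl', rfl⟩ := hX.exists_geodesic_list g
  rw [hg, List.length_eq_one_iff] at hl
  obtain ⟨a, rfl⟩ := hl
  simpa using hl'

theorem IsSymmGen.finite_ball (hX : IsSymmGen X) (n : ℕ) :
    {g : G | wordLength X g ≤ n}.Finite := by
  induction n with
  | zero =>
    refine (Set.finite_singleton (1 : G)).subset fun g hg => ?_
    exact hX.eq_one_of_wordLength_eq_zero (Nat.le_zero.1 hg)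
  | succ n ih =>
    refine ((hX.1.image2 (· * ·) ih).insert 1).subset fun g hg => ?_
    obtain ⟨l, hl, hl', rfl⟩ := hX.exists_geodesic_list g
    cases l with
    | nil => simp
    | cons a l =>
      refine Or.inr ⟨a, hl' a (by simp), l.prod, ?_, by simp⟩
      have hg' : wordLength X (a :: l).prod ≤ n + 1 := hg
      rw [← hl, List.length_cons] at hg'
      exact (wordLength_prod_le fun x hx => hl' x (by simp [hx])).trans (by omega)

theorem exists_wordLength_bound_of_finite (X : Set G) {S : Set G} (hS : S.Finite) :
    ∃ R, ∀ g ∈ S, wordLength X g ≤ R := by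
  obtain ⟨R, hR⟩ := (hS.image (wordLength X)).bddAbove
  exact ⟨R, fun g hg => hR ⟨g, hg, rfl⟩⟩

theorem IsSymmGen.exists_wordLength_hom_le {K : Type*} [Group K] {Y : Set K} (hY : IsSymmGen Y)
    (hX : IsSymmGen X) (f : K →* G) :
    ∃ L : ℕ, ∀ k, wordLength X (f k) ≤ L * wordLength Y k := by
  obtain ⟨L, hL⟩ := exists_wordLength_bound_of_finite X (hY.1.image f)
  refine ⟨L, fun k => ?_⟩
  obtain ⟨l, hl, hl', rfl⟩ := hY.exists_geodesic_list k
  rw [← hl]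
  clear hl
  induction l with
  | nil => simp
  | cons a l ih =>
    have h₁ := hX.wordLength_mul_le (f a) (f l.prod)
    have h₂ := hL (f a) ⟨a, hl' a (by simp), rfl⟩
    have h₃ := ih fun x hx => hl' x (by simp [hx])
    simp only [List.prod_cons, map_mul, List.length_cons, mul_add, mul_one]
    omega

theorem wordDist_self (x : G) : wordDist X x x = 0 := by simp [wordDist]

theorem wordDist_one_left (x : G) : wordDist X 1 x = wordLength X x := by simp [wordDist]

theorem wordDist_mul_left (g x y : G) : wordDist X (g * x) (g * y) = wordDist X x y := by
  simp [wordDist, mul_assoc]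

theorem IsSymmGen.wordDist_comm (hX : IsSymmGen X) (x y : G) :
    wordDist X x y = wordDist X y x := by
  rw [wordDist, ← hX.wordLength_inv]
  simp [wordDist]

theorem IsSymmGen.wordDist_triangle (hX : IsSymmGen X) (x y z : G) :
    wordDist X x z ≤ wordDist X x y + wordDist X y z := by
  have h := hX.wordLength_mul_le (x⁻¹ * y) (y⁻¹ * z)
  rwa [show x⁻¹ * y * (y⁻¹ * z) = x⁻¹ * z by group] at h

theorem IsSymmGen.exists_between (hX : IsSymmGen X) (x y : G) {t : ℕ}
    (ht : t ≤ wordDist X x y) :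
    ∃ p, wordDist X x p = t ∧ wordDist X p y = wordDist X x y - t := by
  obtain ⟨l, hl, hl', hp⟩ := hX.exists_geodesic_list (x⁻¹ * y)
  change l.length = wordDist X x y at hl
  have h₁ : wordDist X x (x * (l.take t).prod) ≤ t := by
    rw [wordDist, inv_mul_cancel_left]
    exact (wordLength_prod_le fun z hz => hl' z (List.mem_of_mem_take hz)).trans (by simp)
  have h₂ : wordDist X (x * (l.take t).prod) y ≤ wordDist X x y - t := by
    have : (x * (l.take t).prod)⁻¹ * y = (l.drop t).prod := by
      rw [mul_inv_rev, mul_assoc, ← hp, ← List.prod_take_mul_prod_drop l t, inv_mul_cancel_left]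
    rw [wordDist, this, ← hl, ← List.length_drop]
    exact wordLength_prod_le fun z hz => hl' z (List.mem_of_mem_drop hz)
  have h₃ := hX.wordDist_triangle x (x * (l.take t).prod) y
  exact ⟨x * (l.take t).prod, by omega, by omega⟩

end WordMetric

/-- An integer-valued metric in which any two points are joined by a discrete geodesic. -/
structure GeodMetric {α : Type*} (d : α → α → ℕ) : Prop where
  self : ∀ x, d x x = 0
  eq_of_zero : ∀ x y, d x y = 0 → x = y
  symm : ∀ x y, d x y = d y x
  tri : ∀ x y z, d x z ≤ d x y + d y z
  geod : ∀ x y t, t ≤ d x y → ∃ p, d x p = t ∧ d p y = d x y - t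

/-- A geodesic metric satisfying the four-point hyperbolicity condition. -/
structure HypMetric {α : Type*} (d : α → α → ℕ) (D : ℕ) : Prop extends GeodMetric d where
  four : ∀ x y z w, d x z + d y w ≤ d x y + d z w + D ∨ d x z + d y w ≤ d y z + d x w + D

theorem IsSymmGen.geodMetric {G : Type*} [Group G] {X : Set G} (hX : IsSymmGen X) :
    GeodMetric (wordDist X) :=
  ⟨wordDist_self, fun _ _ h => inv_mul_eq_one.1 (hX.eq_one_of_wordLength_eq_zero h),
    hX.wordDist_comm, hX.wordDist_triangle, fun x y _ => hX.exists_between x y⟩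

theorem IsWordHyperbolic.exists_hypMetric {G : Type*} [Group G] (h : IsWordHyperbolic G) :
    ∃ X : Set G, IsSymmGen X ∧ ∃ D, HypMetric (wordDist X) D := by
  obtain ⟨X, hX, δ, -, hδ⟩ := h
  refine ⟨X, hX, ⌈2 * δ⌉₊, hX.geodMetric, fun x y z w => ?_⟩
  have h := hδ x y z w
  have hc : 2 * δ ≤ (⌈2 * δ⌉₊ : ℝ) := Nat.le_ceil _
  simp only [gromovProd, ge_iff_le, sub_le_iff_le_add, min_le_iff] at h
  rcases h with h | h
  · left
    have : (wordDist X x z : ℝ) + wordDist X y w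
      ≤ wordDist X x y + wordDist X z w + (⌈2 * δ⌉₊ : ℝ) := by linarith
    exact_mod_cast this
  · right
    have : (wordDist X x z : ℝ) + wordDist X y w
      ≤ wordDist X y z + wordDist X x w + (⌈2 * δ⌉₊ : ℝ) := by linarith
    exact_mod_cast this

theorem HypMetric.isWordHyperbolic {G : Type*} [Group G] {X : Set G} (hX : IsSymmGen X) {D : ℕ}
    (h : HypMetric (wordDist X) D) : IsWordHyperbolic G := by
  refine ⟨X, hX, D, by positivity, fun x y z w => ?_⟩
  simp only [gromovProd, ge_iff_le, sub_le_iff_le_add, min_le_iff]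
  have hD : (0 : ℝ) ≤ D := by positivity
  rcases h.four x y z w with h | h
  · left
    have : (wordDist X x z : ℝ) + wordDist X y w
      ≤ wordDist X x y + wordDist X z w + D := by exact_mod_cast h
    linarith
  · right
    have : (wordDist X x z : ℝ) + wordDist X y w
      ≤ wordDist X y z + wordDist X x w + D := by exact_mod_cast h
    linarith

section Hyperbolic

variable {α : Type*} {d : α → α → ℕ} {D : ℕ}

/-- The points `γ 0, …, γ n` form a geodesic. -/
def IsGeod (d : α → α → ℕ) (γ : ℕ → α) (n : ℕ) : Prop :=
  ∀ i j, i ≤ j → j ≤ n → d (γ i) (γ j) = j - i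

/-- `p` is at distance at most `r` from `S`. -/
def Near (d : α → α → ℕ) (r : ℕ) (S : Set α) (p : α) : Prop := ∃ s ∈ S, d p s ≤ r

/-- Every point on a geodesic between points of `S` is at distance at most `R` from `S`. -/
def QC (d : α → α → ℕ) (R : ℕ) (S : Set α) : Prop :=
  ∀ x ∈ S, ∀ y ∈ S, ∀ p, d x p + d p y = d x y → Near d R S p

theorem Near.mono {r r' : ℕ} {S : Set α} {p : α} (h : Near d r S p) (hr : r ≤ r') :
    Near d r' S p :=
  let ⟨s, hs, h⟩ := h; ⟨s, hs, h.trans hr⟩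

theorem HypMetric.near_of_mem (h : HypMetric d D) {r : ℕ} {S : Set α} {p : α} (hp : p ∈ S) :
    Near d r S p := ⟨p, hp, by simp [h.self]⟩

theorem GeodMetric.dist_le_of_steps (h : GeodMetric d) {c : ℕ → α} {m L : ℕ}
    (hc : ∀ i < m, d (c i) (c (i + 1)) ≤ L) {i j : ℕ} (hij : i ≤ j) (hj : j ≤ m) :
    d (c i) (c j) ≤ L * (j - i) := by
  induction j, hij using Nat.le_induction with
  | base => simp [h.self]
  | succ j hij ih =>
    have h₁ := h.tri (c i) (c j) (c (j + 1))
    have h₂ := hc j (by omega)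
    rw [show j + 1 - i = j - i + 1 by omega, mul_add, mul_one]
    have := ih (by omega)
    omega

theorem GeodMetric.isGeod_of_steps (h : GeodMetric d) {γ : ℕ → α} {n : ℕ}
    (hγ : ∀ i < n, d (γ i) (γ (i + 1)) ≤ 1) (hn : d (γ 0) (γ n) = n) : IsGeod d γ n := by
  intro i j hij hj
  have h₁ := h.dist_le_of_steps hγ hij hj
  have h₂ := h.dist_le_of_steps hγ (Nat.zero_le i) (hij.trans hj)
  have h₃ := h.dist_le_of_steps hγ hj le_rfl
  have h₄ := h.tri (γ 0) (γ i) (γ n)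
  have h₅ := h.tri (γ i) (γ j) (γ n)
  omega

theorem GeodMetric.exists_isGeod (h : GeodMetric d) (x y : α) :
    ∃ γ : ℕ → α, γ 0 = x ∧ γ (d x y) = y ∧ IsGeod d γ (d x y) := by
  suffices ∀ n y, d x y = n → ∃ γ : ℕ → α, γ 0 = x ∧ γ n = y ∧
      ∀ i < n, d (γ i) (γ (i + 1)) ≤ 1 by
    obtain ⟨γ, h₀, h₁, h₂⟩ := this _ y rfl
    exact ⟨γ, h₀, h₁, h.isGeod_of_steps h₂ (by rw [h₀, h₁])⟩
  intro n
  induction n with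
  | zero => exact fun y hy => ⟨fun _ => x, rfl, h.eq_of_zero x y hy, by simp⟩
  | succ n ih =>
    intro y hy
    obtain ⟨p, hp, hp'⟩ := h.geod x y n (by omega)
    obtain ⟨γ, h₀, h₁, h₂⟩ := ih p hp
    refine ⟨fun k => if k ≤ n then γ k else y, by simp [h₀], by simp, fun i hi => ?_⟩
    rcases Nat.lt_or_ge i n with hin | hin
    · simpa [hin.le, Nat.succ_le_of_lt hin] using h₂ i hin
    · obtain rfl : i = n := by omega
      simp [h₁, hp', hy]

theorem GeodMetric.exists_isGeod_through (h : GeodMetric d) {x p y : α}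
    (hp : d x p + d p y = d x y) :
    ∃ γ : ℕ → α, γ 0 = x ∧ γ (d x p) = p ∧ γ (d x y) = y ∧ IsGeod d γ (d x y) := by
  obtain ⟨γ, h₀, h₁, h₂⟩ := h.exists_isGeod x p
  obtain ⟨η, k₀, k₁, k₂⟩ := h.exists_isGeod p y
  have hx : (if 0 ≤ d x p then γ 0 else η (0 - d x p)) = x := by simp [h₀]
  have hy : (if d x y ≤ d x p then γ (d x y) else η (d x y - d x p)) = y := by
    split_ifs with hle
    · rw [show d x y = d x p by omega, h₁]
      exact h.eq_of_zero _ _ (by omega)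
    · rw [← hp, Nat.add_sub_cancel_left, k₁]
  refine ⟨fun k => if k ≤ d x p then γ k else η (k - d x p), hx, by simp [h₁], hy,
    h.isGeod_of_steps (fun i hi => ?_) (by simp only [hx, hy])⟩
  rcases Nat.lt_trichotomy i (d x p) with hlt | rfl | hlt
  · simp [hlt.le, Nat.succ_le_of_lt hlt, h₂ i (i + 1) (by omega) (by omega)]
  · have := k₂ 0 1 (by omega) (by omega)
    rw [k₀] at this
    simp [h₁, this]
  · rw [if_neg (by omega), if_neg (by omega), k₂ _ _ (by omega) (by omega)]
    omega

theorem HypMetric.split (h : HypMetric d D) {x p y : α} {e : ℕ} (z : α)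
    (he : d x p + d p y ≤ d x y + e) :
    d x p + d p z ≤ d x z + (e + D) ∨ d z p + d p y ≤ d z y + (e + D) := by
  have h₁ := h.symm z p
  have h₂ := h.symm y p
  rcases h.four x z y p with h₃ | h₃
  · left; omega
  · right; omega

theorem HypMetric.dist_le_of_excess (h : HypMetric d D) {x p y r : α} {e : ℕ}
    (he : d x p + d p y ≤ d x y + e) (hr : d x r + d r y = d x y)
    (hxr : d x r = min (d x p) (d x y)) : d p r ≤ e + D := by
  have h₁ := h.symm x p
  have h₂ := h.symm r x
  have h₃ := h.symm p r
  have h₄ := h.symm r y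
  have h₅ := h.symm p y
  rcases le_total (d x p) (d x y) with h₆ | h₆
  · rw [min_eq_left h₆] at hxr
    rcases h.four x p y r with h₃ | h₃ <;> omega
  · rw [min_eq_right h₆] at hxr
    have := h.tri p y r
    omega

theorem HypMetric.exists_between_near (h : HypMetric d D) {x p y : α} {e : ℕ}
    (he : d x p + d p y ≤ d x y + e) :
    ∃ r, d x r + d r y = d x y ∧ d p r ≤ e + D := by
  obtain ⟨r, h₁, h₂⟩ := h.geod x y (min (d x p) (d x y)) (min_le_right _ _)
  have : min (d x p) (d x y) ≤ d x y := min_le_right _ _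
  exact ⟨r, by omega, h.dist_le_of_excess he (by omega) h₁⟩

theorem IsGeod.exists_near (h : HypMetric d D) {γ : ℕ → α} {n : ℕ} (hγ : IsGeod d γ n)
    {i j : ℕ} (hi : i ≤ n) (hj : j ≤ n) {p : α} {e : ℕ}
    (he : d (γ i) p + d p (γ j) ≤ d (γ i) (γ j) + e) : ∃ t ≤ n, d p (γ t) ≤ e + D := by
  wlog hij : i ≤ j generalizing i j
  · refine this hj hi ?_ (by omega)
    have h₁ := h.symm (γ i) p
    have h₂ := h.symm (γ j) p
    have h₃ := h.symm (γ i) (γ j)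
    omega
  have h₀ := hγ i j hij hj
  have hm : min (d (γ i) p) (d (γ i) (γ j)) ≤ d (γ i) (γ j) := min_le_right _ _
  have h₁ := hγ i (i + min (d (γ i) p) (d (γ i) (γ j))) (by omega) (by omega)
  have h₂ := hγ (i + min (d (γ i) p) (d (γ i) (γ j))) j (by omega) (by omega)
  exact ⟨i + min (d (γ i) p) (d (γ i) (γ j)), by omega,
    h.dist_le_of_excess he (by omega) (by omega)⟩

theorem QC.near (h : HypMetric d D) {R : ℕ} {S : Set α} (hS : QC d R S) {r e : ℕ} {x y p : α}
    (hx : Near d r S x) (hy : Near d r S y) (he : d x p + d p y ≤ d x y + e) :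
    Near d (R + (e + 4 * r + D)) S p := by
  obtain ⟨s, hs, hxs⟩ := hx
  obtain ⟨t, ht, hyt⟩ := hy
  have he' : d s p + d p t ≤ d s t + (e + 4 * r) := by
    have h₁ := h.tri s x p
    have h₂ := h.tri p y t
    have h₃ := h.tri x s y
    have h₄ := h.tri s t y
    have h₅ := h.symm s x
    have h₆ := h.symm t y
    omega
  obtain ⟨q, hq, hpq⟩ := h.exists_between_near he'
  obtain ⟨w, hw, hqw⟩ := hS s hs t ht q hq
  have := h.tri p q w
  exact ⟨w, hw, by omega⟩

/-- Geodesics issuing from `w` along two quasiconvex sets diverge if the sets do. -/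
theorem HypMetric.diverge (h : HypMetric d D) {R r B : ℕ} {S T : Set α} (hS : QC d R S)
    (hT : QC d R T) {w p p' : α} (hwS : Near d r S w) (hpS : Near d r S p)
    (hwT : Near d r T w) (hpT : Near d r T p')
    (hB : ∀ z, Near d (R + (D + 2 + 4 * r + D)) S z → Near d (R + (D + 2 + 4 * r + D)) T z →
      d w z ≤ B) :
    d w p + d w p' ≤ d p p' + (2 * B + 2) := by
  have h₀ := h.tri w p p'
  have h₁ := h.tri w p' p
  have h₂ := h.symm p p'
  have hs := h.symm p w
  set t := (d w p + d w p' - d p p') / 2 with ht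
  by_contra hlt
  obtain ⟨z, hz, hz'⟩ := h.geod w p t (by omega)
  have h₃ : d w z + d z p' ≤ d w p' + (D + 2) := by
    have := h.symm z p
    rcases h.four z p p' w with h₅ | h₅ <;> have := h.symm z w <;> have := h.symm p' w <;> omega
  have := hB z ((hS.near h hwS hpS (e := 0) (by omega)).mono (by omega))
    (hT.near h hwT hpT h₃)
  omega

/-- Concatenation at two corners with small Gromov products and a long middle side. -/
theorem HypMetric.excess_of_corners (h : HypMetric d D) {p q q' p' : α} {R : ℕ}
    (h₁ : d p q + d q q' ≤ d p q' + R) (h₂ : d q q' + d q' p' ≤ d q p' + R)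
    (h₃ : R + D < d q q') : d p q + d q p' ≤ d p p' + (R + D) := by
  have := h.symm q p'
  have := h.symm q' p'
  have := h.symm q q'
  rcases h.four p p' q' q with h₅ | h₅ <;> omega

end Hyperbolic

section Morse

variable {α : Type*} {d : α → α → ℕ} {D : ℕ}

/-- The points `c 0, …, c m` form a quasigeodesic with step length at most `L`. -/
structure IsQGeod (d : α → α → ℕ) (L l : ℕ) (c : ℕ → α) (m : ℕ) : Prop where
  step : ∀ i < m, d (c i) (c (i + 1)) ≤ L
  le : ∀ i j, i ≤ j → j ≤ m → j - i ≤ l * d (c i) (c j) + l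

theorem HypMetric.exists_near_path (h : HypMetric d D) {c : ℕ → α} {L : ℕ} {p : α} (k : ℕ) :
    ∀ {a b e : ℕ}, a ≤ b → b - a ≤ 2 ^ k → (∀ i, a ≤ i → i < b → d (c i) (c (i + 1)) ≤ L) →
      d (c a) p + d p (c b) ≤ d (c a) (c b) + e →
      ∃ i, a ≤ i ∧ i ≤ b ∧ d p (c i) ≤ e + k * D + L := by
  induction k with
  | zero =>
    intro a b e hab hk hc he
    have : d (c a) (c b) ≤ L := by
      rcases hab.eq_or_lt with rfl | hlt
      · simp [h.self]
      · obtain rfl : b = a + 1 := by simp at hk; omega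
        exact hc a le_rfl hlt
    exact ⟨b, hab, le_rfl, by omega⟩
  | succ k ih =>
    intro a b e hab hk hc he
    rw [pow_succ] at hk
    rcases Nat.lt_or_ge (2 ^ k) (b - a) with hlt | hge
    · rcases h.split (c (a + 2 ^ k)) he with h₁ | h₁
      · obtain ⟨i, h₂, h₃, h₄⟩ := ih (by omega) (by omega)
          (fun i hi hi' => hc i hi (by omega)) h₁
        exact ⟨i, h₂, by omega, h₄.trans (by rw [add_mul]; omega)⟩
      · obtain ⟨i, h₂, h₃, h₄⟩ := ih (by omega) (by omega)
          (fun i hi hi' => hc i (by omega) hi') h₁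
        exact ⟨i, by omega, h₃, h₄.trans (by rw [add_mul]; omega)⟩
    · obtain ⟨i, h₂, h₃, h₄⟩ := ih hab hge hc he
      exact ⟨i, h₂, h₃, h₄.trans (by rw [add_mul]; omega)⟩

theorem exists_linear_le_two_pow (a b : ℕ) : ∃ s₀, ∀ s ≥ s₀, a * s + b ≤ 2 ^ s := by
  have hsq : ∀ s ≥ 4, s * s ≤ 2 ^ s := fun s hs => by
    induction s, hs using Nat.le_induction with
    | base => norm_num
    | succ s hs ih => rw [pow_succ]; nlinarith
  refine ⟨a + b + 4, fun s hs => (?_ : _ ≤ s * s).trans (hsq s (by omega))⟩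
  nlinarith

theorem exists_bound_of_le_log (D L l : ℕ) :
    ∃ R, ∀ r, (∀ k, l * (6 * r) + l ≤ 2 ^ k → r ≤ 2 * D + k * D + L) → r ≤ R := by
  obtain ⟨s₀, hs₀⟩ := exists_linear_le_two_pow (l * (6 * (2 * D + 2))) (l * (6 * (2 * D + 2)) + l)
  refine ⟨2 * (2 * D + L) + (s₀ + 1) * (2 * D + 2), fun r hr => ?_⟩
  set s := r / (2 * D + 2) with hs
  have h₁ : r < (s + 1) * (2 * D + 2) := by
    rw [hs, mul_comm]; exact Nat.lt_mul_div_succ r (by omega)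
  have h₂ : s * (2 * D + 2) ≤ r := Nat.div_mul_le_self r _
  rcases Nat.lt_or_ge s s₀ with hlt | hge
  · have : (s + 1) * (2 * D + 2) ≤ (s₀ + 1) * (2 * D + 2) := by gcongr
    omega
  · have h₃ := hr s ((hs₀ s hge).trans' (by
      have : l * (6 * r) ≤ l * (6 * ((s + 1) * (2 * D + 2))) := by gcongr
      nlinarith))
    nlinarith

/-- Geodesics stay close to quasigeodesics with the same end points. -/
theorem HypMetric.exists_geodesic_near_qgeod (h : HypMetric d D) (L l : ℕ) :
    ∃ R, ∀ c m, IsQGeod d L l c m → ∀ p, d (c 0) p + d p (c m) = d (c 0) (c m) →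
      ∃ i ≤ m, d p (c i) ≤ R := by
  obtain ⟨R, hR⟩ := exists_bound_of_le_log D L l
  refine ⟨R + D, fun c m hc p hp => ?_⟩
  let T : Set ℕ := {k | ∃ p, d (c 0) p + d p (c m) = d (c 0) (c m) ∧ ∀ i ≤ m, k ≤ d p (c i)}
  have hT : BddAbove T := by
    refine ⟨d (c 0) (c m), fun k ⟨p, hp, hk⟩ => ?_⟩
    have := hk m le_rfl
    omega
  have hmem : sSup T ∈ T := Nat.sSup_mem ⟨0, p, hp, by simp⟩ hT
  set r := sSup T with hr
  have hnear : ∀ p, d (c 0) p + d p (c m) = d (c 0) (c m) → ∃ i ≤ m, d p (c i) ≤ r := by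
    intro p hp
    by_contra! hcon
    have : r + 1 ≤ r := le_csSup hT ⟨p, hp, fun i hi => hcon i hi⟩
    omega
  obtain ⟨i, hi, hpi⟩ := hnear p hp
  refine ⟨i, hi, hpi.trans ?_⟩
  clear hi hpi hp p i
  obtain ⟨p, hp, hfar⟩ := hmem
  obtain ⟨y, hy, hy'⟩ := h.geod (c 0) p (d (c 0) p - 2 * r) (by omega)
  obtain ⟨z, hz, hz'⟩ := h.geod p (c m) (min (2 * r) (d p (c m))) (min_le_right _ _)
  have hyt := h.tri (c 0) y (c m)
  have hzt := h.tri (c 0) z (c m)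
  have hyt' := h.tri y p (c m)
  have hzt' := h.tri (c 0) p z
  have hyz := h.tri (c 0) y z
  have hyz' := h.tri y p z
  have hy_near : ∃ i ≤ m, d y (c i) ≤ r ∧ (d y p = 2 * r ∨ d y (c i) = 0) := by
    rcases Nat.lt_or_ge (2 * r) (d (c 0) p) with hlt | hge
    · obtain ⟨i, hi, h₁⟩ := hnear y (by omega)
      exact ⟨i, hi, h₁, by omega⟩
    · have := h.symm y (c 0)
      exact ⟨0, by omega, by omega, by omega⟩
  have hz_near : ∃ i ≤ m, d z (c i) ≤ r ∧ (d p z = 2 * r ∨ d z (c i) = 0) := by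
    rcases Nat.lt_or_ge (2 * r) (d p (c m)) with hlt | hge
    · obtain ⟨i, hi, h₁⟩ := hnear z (by omega)
      exact ⟨i, hi, h₁, by omega⟩
    · exact ⟨m, le_rfl, by omega, by omega⟩
  obtain ⟨i, hi, hyi, hyi'⟩ := hy_near
  obtain ⟨j, hj, hzj, hzj'⟩ := hz_near
  have hpi := hfar i hi
  have hpj := hfar j hj
  have t₁ := h.tri p y (c i)
  have t₂ := h.tri p z (c j)
  have s₁ := h.symm p y
  have s₂ := h.symm (c j) p
  have s₃ := h.symm (c j) z
  have s₄ := h.symm z p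
  have s₅ := h.symm (c i) p
  have s₆ := h.symm (c i) (c j)
  have s₇ := h.symm (c i) y
  have hex : d y p + d p z ≤ d y z + 0 := by omega
  have hij : d (c i) (c j) ≤ 6 * r := by
    have u₁ := h.tri (c i) y (c j)
    have u₂ := h.tri y z (c j)
    omega
  rcases h.split (c i) hex with h₁ | h₁
  · omega
  rcases h.split (c j) h₁ with h₂ | h₂
  · refine (hR r fun k hk => ?_).trans (by omega)
    rcases le_total i j with hle | hle
    · have h₃ := hc.le i j hle hj
      have h₄ : l * d (c i) (c j) ≤ l * (6 * r) := by gcongr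
      obtain ⟨t, -, ht, h₅⟩ := h.exists_near_path k hle (by omega)
        (fun i _ hi' => hc.step i (by omega)) h₂
      have := hfar t (by omega)
      omega
    · have h₃ := hc.le j i hle hi
      have h₄ : l * d (c j) (c i) ≤ l * (6 * r) := by gcongr; omega
      obtain ⟨t, -, ht, h₅⟩ := h.exists_near_path (p := p) k (e := 2 * D) hle (by omega)
        (fun i _ hi' => hc.step i (by omega)) (by omega)
      have := hfar t (by omega)
      omega
  · omega

theorem HypMetric.exists_near_qgeod (h : HypMetric d D) (L l e : ℕ) :
    ∃ R, ∀ c m, IsQGeod d L l c m → ∀ p, d (c 0) p + d p (c m) ≤ d (c 0) (c m) + e →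
      ∃ i ≤ m, d p (c i) ≤ R := by
  obtain ⟨R, hR⟩ := h.exists_geodesic_near_qgeod L l
  refine ⟨R + (e + D), fun c m hc p hp => ?_⟩
  obtain ⟨q, hq, hpq⟩ := h.exists_between_near hp
  obtain ⟨i, hi, hqi⟩ := hR c m hc q hq
  exact ⟨i, hi, (h.tri p q (c i)).trans (by omega)⟩

/-- Quasigeodesics stay close to geodesics with the same end points. -/
theorem HypMetric.exists_excess_qgeod_le (h : HypMetric d D) (L l : ℕ) :
    ∃ E, ∀ c m, IsQGeod d L l c m → ∀ t ≤ m,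
      d (c 0) (c t) + d (c t) (c m) ≤ d (c 0) (c m) + E := by
  obtain ⟨R, hR⟩ := h.exists_geodesic_near_qgeod L l
  refine ⟨2 * (L * (l * (2 * R + 1) + l) + R), fun c m hc t ht => ?_⟩
  obtain ⟨γ, h₀, h₁, hγ⟩ := h.exists_isGeod (c 0) (c m)
  set n := d (c 0) (c m) with hn
  have hbetween : ∀ u ≤ n, d (c 0) (γ u) = u ∧ d (γ u) (c m) = n - u := fun u hu => by
    rw [← h₀, ← h₁, hγ 0 u (by omega) hu, hγ u n hu le_rfl]
    simp
  have key : ∃ u ≤ n, ∃ i j, i ≤ t ∧ t ≤ j ∧ j ≤ m ∧ d (γ u) (c i) ≤ R ∧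
      d (c i) (c j) ≤ 2 * R + 1 := by
    by_cases hlast : ∃ i ≤ t, d (γ n) (c i) ≤ R
    · obtain ⟨i, hi, hni⟩ := hlast
      rw [h₁] at hni
      refine ⟨n, le_rfl, i, m, hi, ht, le_rfl, by rwa [h₁], ?_⟩
      rw [h.symm]
      omega
    · obtain ⟨u, hu, ⟨i, hi, hui⟩, hu'⟩ : ∃ u < n, (∃ i ≤ t, d (γ u) (c i) ≤ R) ∧
          ¬ ∃ i ≤ t, d (γ (u + 1)) (c i) ≤ R := by
        by_contra! hcon
        refine hlast ?_
        have : ∀ u ≤ n, ∃ i ≤ t, d (γ u) (c i) ≤ R := by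
          intro u
          induction u with
          | zero => exact fun _ => ⟨0, by omega, by simp [h₀, h.self]⟩
          | succ u ih => exact fun hu => hcon u hu (ih (by omega))
        exact this n le_rfl
      obtain ⟨j, hj, huj⟩ := hR c m hc (γ (u + 1)) (by
        have := hbetween (u + 1) hu
        omega)
      have hjt : t ≤ j := by
        by_contra hlt
        exact hu' ⟨j, by omega, huj⟩
      refine ⟨u, hu.le, i, j, hi, hjt, hj, hui, ?_⟩
      have t₁ := h.tri (c i) (γ u) (c j)
      have t₂ := h.tri (γ u) (γ (u + 1)) (c j)
      have t₃ := hγ u (u + 1) (by omega) (by omega)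
      have t₄ := h.symm (c i) (γ u)
      omega
  obtain ⟨u, hu, i, j, hi, htj, hj, hui, hij⟩ := key
  have h₂ := hc.le i j (by omega) hj
  have h₃ : l * d (c i) (c j) ≤ l * (2 * R + 1) := by gcongr
  have h₄ := h.dist_le_of_steps hc.step hi ht
  have h₅ : L * (t - i) ≤ L * (l * (2 * R + 1) + l) := by gcongr; omega
  have h₆ := hbetween u hu
  have t₁ := h.tri (c 0) (γ u) (c t)
  have t₂ := h.tri (c t) (γ u) (c m)
  have t₃ := h.tri (c t) (c i) (γ u)
  have s₁ := h.symm (c t) (c i)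
  have s₂ := h.symm (γ u) (c i)
  have s₃ := h.symm (γ u) (c t)
  omega

/-- A geodesic metric with slim triangles satisfies the four-point condition. -/
theorem GeodMetric.hypMetric_of_slim (h : GeodMetric d) {Δ : ℕ}
    (slim : ∀ x y z p, d x p + d p y = d x y →
      ∃ q, d p q ≤ Δ ∧ (d x q + d q z = d x z ∨ d z q + d q y = d z y)) :
    HypMetric d (6 * Δ + 2) := by
  have key : ∀ x y w, ∃ p, d x p + d p y = d x y ∧
      2 * d w p + d x y ≤ d x w + d y w + (4 * Δ + 2) := by
    intro x y w
    obtain ⟨γ, h₀, h₁, hγ⟩ := h.exists_isGeod x y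
    set n := d x y with hn
    have hbetween : ∀ u ≤ n, d x (γ u) = u ∧ d (γ u) y = n - u := fun u hu => by
      rw [← h₀, ← h₁, hγ 0 u (by omega) hu, hγ u n hu le_rfl]
      simp
    let P : ℕ → Prop := fun u => ∃ q, d (γ u) q ≤ Δ ∧ d x q + d q w = d x w
    have hP0 : P 0 := ⟨x, by simp [h₀, h.self], by simp [h.self]⟩
    have hnear : ∃ u ≤ n, P u ∧ ∃ q, d (γ u) q ≤ Δ + 1 ∧ d w q + d q y = d w y := by
      by_cases hlast : P n
      · exact ⟨n, le_rfl, hlast, y, by simp [h₁, h.self], by simp [h.self]⟩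
      · obtain ⟨u, hu, hPu, hPu'⟩ : ∃ u < n, P u ∧ ¬ P (u + 1) := by
          by_contra! hcon
          have : ∀ u ≤ n, P u := by
            intro u
            induction u with
            | zero => exact fun _ => hP0
            | succ u ih => exact fun hu => hcon u hu (ih (by omega))
          exact hlast (this n le_rfl)
        have := hbetween (u + 1) hu
        obtain ⟨q, hq, hq' | hq'⟩ := slim x y w (γ (u + 1)) (by omega)
        · exact absurd ⟨q, hq, hq'⟩ hPu'
        · refine ⟨u, hu.le, hPu, q, ?_, hq'⟩
          have t₁ := h.tri (γ u) (γ (u + 1)) q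
          have t₂ := hγ u (u + 1) (by omega) (by omega)
          omega
    obtain ⟨u, hu, ⟨q, hq, hq'⟩, q', hq₁, hq₁'⟩ := hnear
    have h₂ := hbetween u hu
    refine ⟨γ u, by omega, ?_⟩
    have t₁ := h.tri x q (γ u)
    have t₂ := h.tri (γ u) q w
    have t₃ := h.tri w q' (γ u)
    have t₄ := h.tri (γ u) q' y
    have s₁ := h.symm q (γ u)
    have s₂ := h.symm q' (γ u)
    have s₃ := h.symm w (γ u)
    have s₄ := h.symm w y
    omega
  refine ⟨h, fun x y z w => ?_⟩
  obtain ⟨p, hp, hp'⟩ := key x z w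
  obtain ⟨q, hq, hq' | hq'⟩ := slim x z y p hp
  · left
    have t₁ := h.tri x q w
    have t₂ := h.tri y q w
    have t₃ := h.tri q p w
    have s₁ := h.symm q p
    have s₂ := h.symm p w
    have s₃ := h.symm y q
    omega
  · right
    have t₁ := h.tri y q w
    have t₂ := h.tri z q w
    have t₃ := h.tri q p w
    have s₁ := h.symm q p
    have s₂ := h.symm p w
    have s₃ := h.symm z q
    omega

end Morse

section Subgroups

variable {G : Type*} [Group G] {X : Set G} {D : ℕ}

theorem IsSymmGen.exists_isQGeod_hom {K : Type*} [Group K] {Y : Set K} (hY : IsSymmGen Y)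
    (hX : IsSymmGen X) (f : K →* G) {c : ℕ}
    (hc : ∀ k, wordLength Y k ≤ c * wordLength X (f k) + c) :
    ∃ L, ∀ γ n, IsGeod (wordDist Y) γ n → IsQGeod (wordDist X) L c (fun i => f (γ i)) n := by
  obtain ⟨L, hL⟩ := hY.exists_wordLength_hom_le hX f
  have hf : ∀ x y, wordDist X (f x) (f y) = wordLength X (f (x⁻¹ * y)) := by simp [wordDist]
  refine ⟨L, fun γ n hγ => ⟨fun i hi => ?_, fun i j hij hj => ?_⟩⟩
  · have h₁ := hγ i (i + 1) (by omega) (by omega)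
    rw [wordDist] at h₁
    simpa [hf, h₁] using hL ((γ i)⁻¹ * γ (i + 1))
  · rw [← hγ i j hij hj, hf]
    exact hc _

theorem HypMetric.exists_qc_range (h : HypMetric (wordDist X) D) (hX : IsSymmGen X)
    {K : Type*} [Group K] {Y : Set K} (hY : IsSymmGen Y) (f : K →* G) {c : ℕ}
    (hc : ∀ k, wordLength Y k ≤ c * wordLength X (f k) + c) :
    ∃ R, QC (wordDist X) R (Set.range f) := by
  obtain ⟨L, hL⟩ := hY.exists_isQGeod_hom hX f hc
  obtain ⟨R, hR⟩ := h.exists_geodesic_near_qgeod L c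
  refine ⟨R, ?_⟩
  rintro _ ⟨x, rfl⟩ _ ⟨y, rfl⟩ p hp
  obtain ⟨γ, rfl, h₁, hγ⟩ := hY.geodMetric.exists_isGeod x y
  obtain ⟨i, -, hi⟩ := hR _ _ (hL _ _ hγ) p (by simpa only [h₁] using hp)
  exact ⟨_, ⟨_, rfl⟩, hi⟩

/-- Hyperbolicity passes to undistorted subgroups. -/
theorem HypMetric.exists_hypMetric_of_hom (h : HypMetric (wordDist X) D) (hX : IsSymmGen X)
    {K : Type*} [Group K] {Y : Set K} (hY : IsSymmGen Y) (f : K →* G) {c : ℕ}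
    (hc : ∀ k, wordLength Y k ≤ c * wordLength X (f k) + c) :
    ∃ D', HypMetric (wordDist Y) D' := by
  obtain ⟨L, hL⟩ := hY.exists_isQGeod_hom hX f hc
  obtain ⟨E, hE⟩ := h.exists_excess_qgeod_le L c
  obtain ⟨R, hR⟩ := h.exists_near_qgeod L c (E + D)
  have key : ∀ x y p, wordDist X (f x) (f p) + wordDist X (f p) (f y)
      ≤ wordDist X (f x) (f y) + (E + D) → ∃ q, wordDist Y p q ≤ c * R + c ∧
        wordDist Y x q + wordDist Y q y = wordDist Y x y := by
    intro x y p hp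
    obtain ⟨γ, rfl, h₁, hγ⟩ := hY.geodMetric.exists_isGeod x y
    set n := wordDist Y (γ 0) y
    obtain ⟨i, hi, hpi⟩ := hR _ _ (hL _ _ hγ) (f p) (by simpa only [h₁] using hp)
    refine ⟨γ i, ?_, ?_⟩
    · refine (hc (p⁻¹ * γ i)).trans ?_
      rw [map_mul, map_inv]
      gcongr
      exact hpi
    · have h₂ := hγ 0 i (by omega) hi
      have h₃ := hγ i n hi le_rfl
      rw [h₁] at h₃
      omega
  refine ⟨_, hY.geodMetric.hypMetric_of_slim (Δ := c * R + c) fun x y z p hp => ?_⟩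
  obtain ⟨γ, rfl, h₁, h₂, hγ⟩ := hY.geodMetric.exists_isGeod_through hp
  have he := hE _ _ (hL _ _ hγ) (wordDist Y (γ 0) p) (by omega)
  simp only [h₁, h₂] at he
  rcases h.split (f z) he with h₃ | h₃
  · obtain ⟨q, hq, hq'⟩ := key _ _ _ h₃
    exact ⟨q, hq, Or.inl hq'⟩
  · obtain ⟨q, hq, hq'⟩ := key _ _ _ h₃
    exact ⟨q, hq, Or.inr hq'⟩

/-- Geometrically quasiconvex subgroups are finitely generated and undistorted. -/
theorem QC.exists_isSymmGen (hX : IsSymmGen X) {A : Subgroup G} {R : ℕ}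
    (hA : QC (wordDist X) R (A : Set G)) :
    ∃ Y : Set A, IsSymmGen Y ∧ ∀ a : A, wordLength Y a ≤ wordLength X (a : G) + 1 := by
  let Y : Set A := {a | wordLength X (a : G) ≤ 2 * R + 1}
  have hlist : ∀ a : A, ∃ l : List A, l.length ≤ wordLength X (a : G) + 1 ∧
      (∀ x ∈ l, x ∈ Y) ∧ l.prod = a := by
    intro a
    obtain ⟨γ, h₀, h₁, hγ⟩ := hX.geodMetric.exists_isGeod 1 (a : G)
    rw [wordDist_one_left] at h₁ hγ
    have claim : ∀ i ≤ wordLength X (a : G), ∀ s : A, wordDist X (γ i) s ≤ R →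
        ∃ l : List A, l.length ≤ i + 1 ∧ (∀ x ∈ l, x ∈ Y) ∧ l.prod = s := by
      intro i
      induction i with
      | zero =>
        intro _ s hs
        rw [h₀, wordDist_one_left] at hs
        refine ⟨[s], by simp, ?_, by simp⟩
        simp only [List.mem_singleton, forall_eq]
        change wordLength X (s : G) ≤ 2 * R + 1
        omega
      | succ i ih =>
        intro hi s hs
        have e₁ := hγ 0 i (by omega) (by omega)
        have e₂ := hγ i (wordLength X (a : G)) (by omega) le_rfl
        have e₃ := hγ i (i + 1) (by omega) hi
        obtain ⟨s', hs', hd⟩ := hA 1 A.one_mem a a.2 (γ i) (by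
          rw [h₀] at e₁; rw [h₁] at e₂; rw [wordDist_one_left a.1]; omega)
        obtain ⟨l, hl, hl', hp⟩ := ih (by omega) ⟨s', hs'⟩ hd
        refine ⟨l ++ [(⟨s', hs'⟩ : A)⁻¹ * s], by simpa using hl, ?_, by simp [hp]⟩
        simp only [List.mem_append, List.mem_singleton]
        rintro x (hx | rfl)
        · exact hl' x hx
        · change wordDist X s' (s : G) ≤ 2 * R + 1
          have t₁ := hX.wordDist_triangle s' (γ i) s
          have t₂ := hX.wordDist_triangle (γ i) (γ (i + 1)) s
          have t₃ := hX.wordDist_comm s' (γ i)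
          omega
    exact claim _ le_rfl a (by rw [h₁, wordDist_self]; omega)
  refine ⟨Y, ⟨?_, fun a ha => ?_, ?_⟩, fun a => ?_⟩
  · exact (hX.finite_ball (2 * R + 1)).preimage Subtype.val_injective.injOn
  · change wordLength X (a : G)⁻¹ ≤ _
    rw [hX.wordLength_inv]
    exact ha
  · refine eq_top_iff.2 fun a _ => ?_
    obtain ⟨l, -, hl, rfl⟩ := hlist a
    exact Subgroup.list_prod_mem _ fun x hx => Subgroup.subset_closure (hl x hx)
  · obtain ⟨l, hl, hl', rfl⟩ := hlist a
    exact (wordLength_prod_le hl').trans hl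

theorem QC.of_finite (hX : IsSymmGen X) {S : Set G} (hS : S.Finite) :
    ∃ R, QC (wordDist X) R S := by
  obtain ⟨R, hR⟩ := ((hS.prod hS).image fun x => wordDist X x.1 x.2).bddAbove
  refine ⟨R, fun x hx y hy p hp => ⟨x, hx, ?_⟩⟩
  have h₁ : wordDist X x y ≤ R := hR ⟨(x, y), ⟨hx, hy⟩, rfl⟩
  have h₂ := hX.wordDist_comm x p
  omega

theorem QC.of_near (h : HypMetric (wordDist X) D) {R r : ℕ} {S T : Set G}
    (hS : QC (wordDist X) R S) (hST : S ⊆ T) (hT : ∀ t ∈ T, Near (wordDist X) r S t) :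
    QC (wordDist X) (R + (0 + 4 * r + D)) T := fun x hx y hy _ hp =>
  let ⟨s, hs, hps⟩ := hS.near h (hT x hx) (hT y hy) (e := 0) hp.le
  ⟨s, hST hs, hps⟩

theorem near_mul_left {r : ℕ} {S : Set G} {g p : G}
    (hp : Near (wordDist X) r {x | g * x ∈ S} p) : Near (wordDist X) r S (g * p) :=
  let ⟨s, hs, hps⟩ := hp
  ⟨g * s, hs, by rwa [wordDist_mul_left]⟩

theorem near_of_mul_left {r : ℕ} {S : Set G} (g : G) {p : G}
    (hp : Near (wordDist X) r S (g * p)) : Near (wordDist X) r {x | g * x ∈ S} p :=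
  let ⟨s, hs, hps⟩ := hp
  ⟨g⁻¹ * s, by simpa using hs, by rwa [← wordDist_mul_left g, mul_inv_cancel_left]⟩

theorem QC.mul_left {R : ℕ} {S : Set G} (hS : QC (wordDist X) R S) (g : G) :
    QC (wordDist X) R {x | g * x ∈ S} := fun x hx y hy _ hp =>
  near_of_mul_left g <| hS _ hx _ hy _ <| by simpa only [wordDist_mul_left] using hp

/-- A coarse intersection of subgroups is close to the intersection. -/
theorem IsSymmGen.exists_near_inf (hX : IsSymmGen X) (P Q : Subgroup G) (r : ℕ) :
    ∃ R, ∀ g, Near (wordDist X) r P g → Near (wordDist X) r Q g →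
      Near (wordDist X) R (P ⊓ Q : Subgroup G) g := by
  classical
  let B := {b : G | wordLength X b ≤ r}
  have hB : B.Finite := hX.finite_ball r
  let w : G × G → G := fun b =>
    if h : ∃ g, g * b.1 ∈ P ∧ g * b.2 ∈ Q then h.choose else 1
  obtain ⟨R, hR⟩ := exists_wordLength_bound_of_finite X
    ((hB.prod hB).image fun b => (w b)⁻¹)
  refine ⟨R, fun g ⟨p, hp, hgp⟩ ⟨q, hq, hgq⟩ => ?_⟩
  have hex : ∃ x, x * (g⁻¹ * p) ∈ P ∧ x * (g⁻¹ * q) ∈ Q := ⟨g, by simpa using hp, by simpa using hq⟩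
  have hw : w (g⁻¹ * p, g⁻¹ * q) = hex.choose := dif_pos hex
  have hw' := hex.choose_spec
  rw [← hw] at hw'
  refine ⟨g * (w (g⁻¹ * p, g⁻¹ * q))⁻¹, ⟨?_, ?_⟩, ?_⟩
  · have := P.mul_mem hp (P.inv_mem hw'.1)
    simpa [mul_assoc] using this
  · have := Q.mul_mem hq (Q.inv_mem hw'.2)
    simpa [mul_assoc] using this
  · simpa [wordDist] using hR _ ⟨(g⁻¹ * p, g⁻¹ * q), ⟨hgp, hgq⟩, rfl⟩

end Subgroups

section Cyclic

variable {G : Type*} [Group G] {X : Set G} {D : ℕ}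

theorem HypMetric.exists_card_le_of_pow_bound (h : HypMetric (wordDist X) D) (hX : IsSymmGen X)
    {z : G} (hz : ¬ IsOfFinOrder z) :
    ∃ β, ∀ K M, (∀ k ≤ K, wordLength X (z ^ k) ≤ M) → K + 1 ≤ (2 * M + 1) * β := by
  classical
  have hinj : Function.Injective fun n : ℕ => z ^ n := injective_pow_iff_not_isOfFinOrder.2 hz
  let B := (hX.finite_ball (2 * D + D)).toFinset
  refine ⟨B.card, fun K M hM => ?_⟩
  obtain ⟨N, hN⟩ : ∃ N : ℕ, 4 * M + 4 * D + 4 < wordLength X (z ^ N) := by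
    by_contra! hcon
    exact Set.infinite_of_injective_forall_mem hinj hcon (hX.finite_ball _)
  obtain ⟨γ, h₀, h₁, hγ⟩ := h.exists_isGeod 1 (z ^ N)
  rw [wordDist_one_left] at h₁ hγ
  set n := wordLength X (z ^ N) with hn
  obtain ⟨m, hm, hm'⟩ := h.geod 1 (z ^ N) (n / 2) (by rw [wordDist_one_left]; omega)
  rw [wordDist_one_left (z ^ N), ← hn] at hm'
  set t₀ := n / 2 with ht₀
  have key : ∀ k ≤ K, ∃ t ∈ Finset.Icc (t₀ - M) (t₀ + M),
      wordDist X (z ^ k * m) (γ t) ≤ 2 * D + D := by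
    intro k hk
    set p := z ^ k * m with hp
    have hk' := hM k hk
    have e₁ : wordDist X (z ^ k) p = t₀ := by
      rw [← hm, ← wordDist_mul_left (z ^ k) 1 m, mul_one]
    have e₂ : wordDist X p (z ^ k * z ^ N) = n - t₀ := by rw [← hm', wordDist_mul_left]
    have e₃ : wordDist X (z ^ k) (z ^ k * z ^ N) = n := by
      rw [hn, ← wordDist_one_left (X := X) (z ^ N), ← wordDist_mul_left (z ^ k) 1, mul_one]
    have e₄ : wordDist X (z ^ N) (z ^ k * z ^ N) ≤ M := by
      rw [(Commute.pow_pow_self z k N).eq, wordDist, inv_mul_cancel_left]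
      exact hk'
    have e₅ : wordDist X 1 (z ^ k) ≤ M := by rwa [wordDist_one_left]
    have e₆ : wordDist X 1 (z ^ N) = n := wordDist_one_left _
    have s₁ := h.symm 1 (z ^ k)
    have s₂ := h.symm p 1
    have t₁ := h.tri 1 (z ^ k) p
    have t₂ := h.tri (z ^ k) 1 p
    have t₃ := h.tri p (z ^ N) (z ^ k * z ^ N)
    have s₃ := h.symm p (z ^ N)
    rcases h.split (x := z ^ k) (p := p) (y := z ^ k * z ^ N) (e := 0) 1 (by omega) with h₂ | h₂
    · omega
    rcases h.split (z ^ N) h₂ with h₃ | h₃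
    · have hmin : min (wordDist X 1 p) n ≤ n := min_le_right _ _
      refine ⟨min (wordDist X 1 p) n, Finset.mem_Icc.2 ⟨by omega, by omega⟩, ?_⟩
      have g₁ := hγ 0 _ (Nat.zero_le _) hmin
      have g₂ := hγ _ n hmin le_rfl
      rw [h₀] at g₁
      rw [h₁] at g₂
      refine h.dist_le_of_excess (x := 1) (y := z ^ N) (by omega) (by omega) ?_
      rw [g₁, e₆]
      omega
    · omega
  have hsub : (Finset.range (K + 1)).image (fun k => z ^ k * m) ⊆
      (Finset.Icc (t₀ - M) (t₀ + M) ×ˢ B).image fun x => γ x.1 * x.2 := by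
    intro p hp
    obtain ⟨k, hk, rfl⟩ := Finset.mem_image.1 hp
    obtain ⟨t, ht, hd⟩ := key k (by simpa [Nat.lt_succ_iff] using hk)
    refine Finset.mem_image.2 ⟨(t, (γ t)⁻¹ * (z ^ k * m)), Finset.mem_product.2 ⟨ht, ?_⟩, by simp⟩
    rw [hX.wordDist_comm] at hd
    simpa [B, wordDist] using hd
  have hcard := Finset.card_le_card hsub
  rw [Finset.card_image_of_injective _ fun a b hab => hinj (mul_right_cancel hab),
    Finset.card_range] at hcard
  refine hcard.trans (Finset.card_image_le.trans ?_)
  rw [Finset.card_product, Nat.card_Icc]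
  gcongr
  omega

/-- Cyclic subgroups of hyperbolic groups are undistorted. -/
theorem HypMetric.exists_le_wordLength_pow (h : HypMetric (wordDist X) D) (hX : IsSymmGen X)
    {z : G} (hz : ¬ IsOfFinOrder z) : ∃ l, ∀ n : ℕ, n ≤ l * wordLength X (z ^ n) := by
  obtain ⟨β, hβ⟩ := h.exists_card_le_of_pow_bound hX hz
  refine ⟨2 * β, fun n => ?_⟩
  by_contra! hlt
  obtain ⟨B, hB⟩ := exists_wordLength_bound_of_finite X
    ((Finset.range n).finite_toSet.image fun k => z ^ k)
  have hmul : ∀ s : ℕ, wordLength X (z ^ (n * s)) ≤ s * wordLength X (z ^ n) := by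
    intro s
    induction s with
    | zero => simp
    | succ s ih =>
      have := hX.wordLength_mul_le (z ^ (n * s)) (z ^ n)
      rw [mul_add, mul_one, pow_add, add_mul, one_mul]
      omega
  have hM : ∀ s, ∀ k ≤ n * s, wordLength X (z ^ k) ≤ s * wordLength X (z ^ n) + B := by
    intro s k hk
    have hn : 0 < n := by omega
    have h₁ := hX.wordLength_mul_le (z ^ (n * (k / n))) (z ^ (k % n))
    rw [← pow_add, Nat.div_add_mod] at h₁
    have h₂ := hmul (k / n)
    have h₃ := hB (z ^ (k % n)) ⟨k % n, by simpa using Nat.mod_lt k hn, rfl⟩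
    have h₄ : k / n * wordLength X (z ^ n) ≤ s * wordLength X (z ^ n) := by
      gcongr
      exact Nat.div_le_of_le_mul hk
    omega
  have h₁ := hβ _ _ (hM ((2 * B + 1) * β))
  have h₂ : (2 * β * wordLength X (z ^ n) + 1) * ((2 * B + 1) * β) ≤ n * ((2 * B + 1) * β) :=
    Nat.mul_le_mul_right _ hlt
  ring_nf at h₁ h₂
  omega

theorem isQGeod_zpow {z : G} {l : ℕ}
    (hl : ∀ n : ℕ, n ≤ l * wordLength X (z ^ n)) (a : ℤ) (m : ℕ) :
    IsQGeod (wordDist X) (wordLength X z) l (fun i => z ^ (a + i)) m := by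
  have hd : ∀ i j : ℕ, i ≤ j →
      wordDist X (z ^ (a + i)) (z ^ (a + j)) = wordLength X (z ^ (j - i)) := by
    intro i j hij
    rw [wordDist, ← zpow_neg, ← zpow_add, ← zpow_natCast]
    congr 2
    push_cast [hij]
    ring
  refine ⟨fun i _ => ?_, fun i j hij _ => ?_⟩
  · rw [hd i (i + 1) (by omega)]
    simp
  · rw [hd i j hij]
    exact (hl _).trans (by omega)

theorem HypMetric.exists_qc_zpowers (h : HypMetric (wordDist X) D) (hX : IsSymmGen X) (z : G) :
    ∃ R, QC (wordDist X) R (Subgroup.zpowers z : Set G) := by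
  by_cases hz : IsOfFinOrder z
  · exact QC.of_finite hX hz.finite_zpowers
  obtain ⟨l, hl⟩ := h.exists_le_wordLength_pow hX hz
  obtain ⟨R, hR⟩ := h.exists_geodesic_near_qgeod (wordLength X z) l
  refine ⟨R, ?_⟩
  suffices ∀ a b : ℤ, a ≤ b → ∀ p, wordDist X (z ^ a) p + wordDist X p (z ^ b)
      = wordDist X (z ^ a) (z ^ b) → Near (wordDist X) R (Subgroup.zpowers z : Set G) p by
    rintro _ ⟨a, rfl⟩ _ ⟨b, rfl⟩ p hp
    rcases le_total a b with hab | hab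
    · exact this a b hab p hp
    · refine this b a hab p ?_
      have s₁ := h.symm (z ^ b) p
      have s₂ := h.symm p (z ^ a)
      have s₃ := h.symm (z ^ b) (z ^ a)
      simp only at hp
      omega
  intro a b hab p hp
  obtain ⟨m, rfl⟩ := Int.le.dest hab
  obtain ⟨i, -, hi⟩ := hR _ _ (isQGeod_zpow hl a m) p (by simpa using hp)
  exact ⟨_, ⟨_, rfl⟩, hi⟩

/-- Conjugates commensurable to a quasiconvex subgroup generated by `z` up to finite index come
from cosets meeting a fixed ball. -/
theorem HypMetric.exists_near_coset (h : HypMetric (wordDist X) D) (hX : IsSymmGen X) {z : G}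
    (hz : ¬ IsOfFinOrder z) {C : Subgroup G} (hzC : z ∈ C) {R : ℕ}
    (hC : QC (wordDist X) R (C : Set G)) :
    ∃ R', ∀ g, (∃ a b : ℤ, a ≠ 0 ∧ z ^ a = g * z ^ b * g⁻¹) →
      Near (wordDist X) R' {x | g⁻¹ * x ∈ C} 1 := by
  obtain ⟨l, hl⟩ := h.exists_le_wordLength_pow hX hz
  obtain ⟨E, hE⟩ := h.exists_excess_qgeod_le (wordLength X z) l
  refine ⟨R + ((E + D + D) + 4 * 0 + D), fun g hg => ?_⟩
  obtain ⟨a, b, ha, hab⟩ : ∃ (a : ℕ) (b : ℤ), 0 < a ∧ z ^ a = g * z ^ b * g⁻¹ := by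
    obtain ⟨a, b, ha, hab⟩ := hg
    rcases lt_or_gt_of_ne ha with hneg | hpos
    · refine ⟨a.natAbs, -b, by omega, ?_⟩
      rw [← zpow_natCast, show (a.natAbs : ℤ) = -a by omega, zpow_neg, hab, zpow_neg]
      group
    · refine ⟨a.natAbs, b, by omega, ?_⟩
      rw [← zpow_natCast, show (a.natAbs : ℤ) = a by omega, hab]
  set T := wordLength X g + E + D + D with hT
  set n := l * T + 1 with hn
  have hlong : T < wordLength X (z ^ (a * n)) := by
    have h₁ := hl (a * n)
    have h₂ : n ≤ a * n := Nat.le_mul_of_pos_left n ha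
    have h₃ : l * T < l * wordLength X (z ^ (a * n)) := by omega
    exact lt_of_mul_lt_mul_left h₃ (Nat.zero_le l)
  have hpow : z ^ (a * n) * g = g * z ^ (b * n) := by
    rw [pow_mul, hab, conj_pow, zpow_mul, zpow_natCast]
    simp
  have hpow' : (z ^ (a * n))⁻¹ * g = g * z ^ (-(b * n)) := by
    rw [zpow_neg, inv_mul_eq_iff_eq_mul, ← mul_assoc, hpow]
    simp
  have he := hE _ _ (isQGeod_zpow hl (-(a * n : ℕ)) (2 * (a * n))) (a * n) (by omega)
  have e₁ : z ^ (-((a * n : ℕ) : ℤ) + ((0 : ℕ) : ℤ)) = (z ^ (a * n))⁻¹ := by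
    rw [Nat.cast_zero, add_zero, zpow_neg, zpow_natCast]
  have e₂ : z ^ (-((a * n : ℕ) : ℤ) + ((a * n : ℕ) : ℤ)) = 1 := by simp
  have e₃ : z ^ (-((a * n : ℕ) : ℤ) + ((2 * (a * n) : ℕ) : ℤ)) = z ^ (a * n) := by
    rw [← zpow_natCast]
    congr 1
    push_cast
    ring
  simp only [e₁, e₂, e₃] at he
  set x := (z ^ (a * n))⁻¹ with hx
  set y := z ^ (a * n) with hy
  have d₁ : wordDist X x (x * g) = wordLength X g := by simp [wordDist]
  have d₂ : wordDist X y (y * g) = wordLength X g := by simp [wordDist]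
  have d₃ : wordDist X 1 y = wordLength X y := wordDist_one_left y
  have d₄ : wordDist X 1 x = wordLength X y := by rw [wordDist_one_left, hx, hX.wordLength_inv]
  have s₁ := h.symm x 1
  have s₂ := h.symm (y * g) 1
  have s₃ := h.symm (y * g) y
  have t₁ := h.tri 1 (x * g) x
  have s₄ := h.symm (x * g) x
  have t₂ := h.tri 1 (y * g) y
  rcases h.split (x * g) he with h₁ | h₁
  · omega
  rcases h.split (y * g) h₁ with h₂ | h₂
  · refine (hC.mul_left g⁻¹).near h (h.near_of_mem ?_) (h.near_of_mem ?_) h₂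
    · simp only [Set.mem_ofPred_eq, hpow', inv_mul_cancel_left]
      exact C.zpow_mem hzC _
    · simp only [Set.mem_ofPred_eq, hpow, inv_mul_cancel_left]
      exact C.zpow_mem hzC _
  · omega

end Cyclic

section VirtuallyCyclic

variable {G : Type*} [Group G] {X : Set G} {D : ℕ} {C : Subgroup G} {z : G}

/-- `C` is the union of finitely many right cosets of the cyclic group generated by `z ∈ C`. -/
structure VirtCyclicBy (C : Subgroup G) (z : G) : Prop where
  mem : z ∈ C
  cover : ∃ F : Set G, F.Finite ∧ ∀ c ∈ C, ∃ k : ℤ, ∃ f ∈ F, c = z ^ k * f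

theorem exists_virtCyclicBy (hC : IsVirtuallyCyclic C) : ∃ z, VirtCyclicBy C z := by
  obtain ⟨Z, hZ, hfin⟩ := hC
  obtain ⟨⟨z, hz⟩, hgen⟩ := hZ.exists_generator
  refine ⟨z, z.2, Set.range fun q : C ⧸ Z => ((q.out⁻¹ : C) : G), Set.finite_range _,
    fun c hc => ?_⟩
  have hmem : (((⟨c, hc⟩⁻¹ : C) : C ⧸ Z)).out⁻¹ * (⟨c, hc⟩ : C)⁻¹ ∈ Z :=
    QuotientGroup.eq.1 (QuotientGroup.out_eq' _)
  obtain ⟨k, hk⟩ := Subgroup.mem_zpowers_iff.1 (hgen ⟨_, hmem⟩)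
  refine ⟨-k, _, ⟨((⟨c, hc⟩⁻¹ : C) : C ⧸ Z), rfl⟩, ?_⟩
  have hk' : (z : G) ^ k = (((((⟨c, hc⟩⁻¹ : C) : C ⧸ Z)).out⁻¹ : C) : G) * c⁻¹ := by
    simpa using congrArg (fun y : Z => ((y : C) : G)) hk
  rw [zpow_neg, hk']
  simp

theorem VirtCyclicBy.exists_pow_eq (hz : VirtCyclicBy C z) {c : G} (hc : c ∈ C) :
    ∃ k : ℕ, 0 < k ∧ ∃ b : ℤ, c ^ k = z ^ b := by
  obtain ⟨F, hF, hcov⟩ := hz.cover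
  choose k f hf hkf using fun n : ℕ => hcov (c ^ n) (C.pow_mem hc n)
  obtain ⟨m, n, hmn, he⟩ := hF.exists_lt_map_eq_of_forall_mem hf
  refine ⟨n - m, by omega, k n - k m, ?_⟩
  rw [pow_sub _ hmn.le, hkf n, hkf m, he, zpow_sub]
  group

theorem VirtCyclicBy.exists_zpow_mem (hz : VirtCyclicBy C z) {I : Subgroup G} (hIC : I ≤ C)
    (hI : (I : Set G).Infinite) : ¬ IsOfFinOrder z ∧ ∃ a : ℤ, a ≠ 0 ∧ z ^ a ∈ I := by
  obtain ⟨F, hF, hcov⟩ := hz.cover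
  refine ⟨fun hfin => hI ?_, ?_⟩
  · refine (hfin.finite_zpowers.image2 (· * ·) hF).subset fun c hc => ?_
    obtain ⟨k, f, hf, rfl⟩ := hcov c (hIC hc)
    exact ⟨z ^ k, ⟨k, rfl⟩, f, hf, rfl⟩
  · have hcov' : ∀ c : G, ∃ (k : ℤ) (f : G), c ∈ I → f ∈ F ∧ c = z ^ k * f := fun c => by
      by_cases hc : c ∈ I
      · obtain ⟨k, f, hf, h⟩ := hcov c (hIC hc)
        exact ⟨k, f, fun _ => ⟨hf, h⟩⟩
      · exact ⟨0, 1, fun h => (hc h).elim⟩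
    choose k f hf using hcov'
    obtain ⟨x, hx, y, hy, hxy, he⟩ :=
      hI.exists_ne_map_eq_of_mapsTo (fun c hc => (hf c hc).1) hF
    have hxy' : x * y⁻¹ = z ^ (k x - k y) := by
      rw [zpow_sub, ← mul_inv_eq_iff_eq_mul.2 (hf x hx).2,
        ← mul_inv_eq_iff_eq_mul.2 (hf y hy).2, he]
      group
    refine ⟨k x - k y, fun h0 => hxy ?_, hxy' ▸ I.mul_mem hx (I.inv_mem hy)⟩
    rwa [h0, zpow_zero, mul_inv_eq_one] at hxy'

theorem VirtCyclicBy.exists_near (hz : VirtCyclicBy C z) (hX : IsSymmGen X) {K : Subgroup G}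
    {a : ℤ} (ha : a ≠ 0) (hK : z ^ a ∈ K) : ∃ r, ∀ c ∈ C, Near (wordDist X) r K c := by
  obtain ⟨F, hF, hcov⟩ := hz.cover
  obtain ⟨r, hr⟩ := exists_wordLength_bound_of_finite X
    (((Set.finite_Ico 0 |a|).image fun k : ℤ => z ^ k).image2 (· * ·) hF)
  refine ⟨r, fun c hc => ?_⟩
  obtain ⟨k, f, hf, rfl⟩ := hcov c hc
  refine ⟨(z ^ a) ^ (k / a), K.zpow_mem hK _, ?_⟩
  rw [hX.wordDist_comm]
  refine hr _ ⟨z ^ (k % a), ⟨k % a, ⟨Int.emod_nonneg _ ha, Int.emod_lt_abs _ ha⟩, rfl⟩, f, hf, ?_⟩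
  rw [← zpow_mul, ← zpow_neg, ← mul_assoc, ← zpow_add]
  simp only
  congr 2
  have := Int.emod_add_mul_ediv k a
  omega

/-- Near containment of `C` in `K` when the two have infinite intersection. -/
theorem VirtCyclicBy.exists_near_of_infinite (hz : VirtCyclicBy C z) (hX : IsSymmGen X)
    {K : Subgroup G} (hK : ((K ⊓ C : Subgroup G) : Set G).Infinite) :
    ∃ r, ∀ c ∈ C, Near (wordDist X) r K c := by
  obtain ⟨-, a, ha, haK⟩ := hz.exists_zpow_mem inf_le_right hK
  exact hz.exists_near hX ha haK.1

theorem VirtCyclicBy.exists_qc (hz : VirtCyclicBy C z) (h : HypMetric (wordDist X) D)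
    (hX : IsSymmGen X) : ∃ R, QC (wordDist X) R (C : Set G) := by
  obtain ⟨R, hR⟩ := h.exists_qc_zpowers hX z
  obtain ⟨r, hr⟩ := hz.exists_near hX one_ne_zero
    (show z ^ (1 : ℤ) ∈ Subgroup.zpowers z by simp)
  exact ⟨_, hR.of_near h (Subgroup.zpowers_le.2 hz.mem) hr⟩

/-- The conjugates of `z` by `x` and `y` have infinite order and a common nontrivial power. -/
def Par (z x y : G) : Prop :=
  ¬ IsOfFinOrder z ∧ ∃ a b : ℤ, a ≠ 0 ∧ b ≠ 0 ∧ x * z ^ a * x⁻¹ = y * z ^ b * y⁻¹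

theorem Par.trans {x y w : G} (h₁ : Par z x y) (h₂ : Par z y w) : Par z x w := by
  obtain ⟨hz, a, b, ha, hb, hab⟩ := h₁
  obtain ⟨-, a', b', ha', hb', hab'⟩ := h₂
  refine ⟨hz, a * a', b' * b, mul_ne_zero ha ha', mul_ne_zero hb' hb, ?_⟩
  rw [zpow_mul, zpow_mul, ← conj_zpow (b := z ^ a), ← conj_zpow (b := z ^ b'), hab, ← hab',
    conj_zpow, conj_zpow, ← zpow_mul, ← zpow_mul, mul_comm]

theorem par_mul_left (g : G) {x y : G} : Par z (g * x) (g * y) ↔ Par z x y := by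
  refine and_congr_right fun _ => exists₂_congr fun a b => and_congr_right fun _ =>
    and_congr_right fun _ => ?_
  simp only [mul_inv_rev, mul_assoc, mul_right_inj]
  simp only [← mul_assoc, mul_left_inj]

theorem VirtCyclicBy.finite_of_not_par (hz : VirtCyclicBy C z) {g : G} (hg : ¬ Par z 1 g)
    (I : Subgroup G) (hI : ∀ x ∈ I, x ∈ C ∧ g⁻¹ * x * g ∈ C) : (I : Set G).Finite := by
  by_contra hinf
  obtain ⟨hz', a, ha, haI⟩ := hz.exists_zpow_mem (fun x hx => (hI x hx).1) hinf
  obtain ⟨k, hk, b, hb⟩ := hz.exists_pow_eq (hI _ haI).2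
  have he : z ^ (a * k) = g * z ^ b * g⁻¹ := by
    rw [← hb, zpow_mul, zpow_natCast]
    have := conj_pow (a := g⁻¹) (b := z ^ a) (i := k)
    rw [inv_inv] at this
    rw [this]
    group
  have hne : a * (k : ℤ) ≠ 0 := mul_ne_zero ha (by omega)
  refine hg ⟨hz', a * k, b, hne, ?_, by simpa using he⟩
  rintro rfl
  refine hz' (isOfFinOrder_iff_zpow_eq_one.2 ⟨_, hne, ?_⟩)
  simpa using he

theorem VirtCyclicBy.exists_finite_par (hz : VirtCyclicBy C z) (h : HypMetric (wordDist X) D)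
    (hX : IsSymmGen X) :
    ∃ T : Set G, T.Finite ∧ ∀ g, Par z 1 g → ∃ t ∈ T, g⁻¹ * t ∈ C := by
  by_cases hfin : IsOfFinOrder z
  · exact ⟨∅, Set.finite_empty, fun g hg => (hg.1 hfin).elim⟩
  obtain ⟨R, hR⟩ := hz.exists_qc h hX
  obtain ⟨R', hR'⟩ := h.exists_near_coset hX hfin hz.mem hR
  refine ⟨_, hX.finite_ball R', fun g hg => ?_⟩
  obtain ⟨-, a, b, ha, -, hab⟩ := hg
  obtain ⟨t, ht, ht'⟩ := hR' g ⟨a, b, ha, by simpa using hab⟩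
  exact ⟨t, by simpa [wordDist_one_left] using ht', ht⟩

end VirtuallyCyclic

section Amalgam

variable {G : Type u} [Group G] {A : Bool → Subgroup G} {C : Subgroup G}

/-- `g` is a nonempty product of elements taken alternately from `A true \ C` and `A false \ C`,
the first one from `A i` and the last one from `A j`. -/
inductive Red (A : Bool → Subgroup G) (C : Subgroup G) : Bool → Bool → G → Prop
  | single {i : Bool} {a : G} : a ∈ A i → a ∉ C → Red A C i i a
  | snoc {i j k : Bool} {g a : G} : Red A C i j g → j ≠ k → a ∈ A k → a ∉ C → Red A C i k (g * a)

theorem Red.concat {i j k l : Bool} {g h : G} (hg : Red A C i j g) (hh : Red A C k l h)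
    (hjk : j ≠ k) : Red A C i l (g * h) := by
  induction hh with
  | single ha ha' => exact hg.snoc hjk ha ha'
  | snoc _ hne ha ha' ih =>
    rw [← mul_assoc]
    exact ih.snoc hne ha ha'

theorem Red.inv {i j : Bool} {g : G} (hg : Red A C i j g) : Red A C j i g⁻¹ := by
  induction hg with
  | single ha ha' => exact .single (inv_mem ha) (by simpa using ha')
  | snoc _ hne ha ha' ih =>
    rw [mul_inv_rev]
    exact (Red.single (inv_mem ha) (by simpa using ha')).concat ih hne.symm

theorem Red.mul_mem {i j : Bool} {g c : G} (hCA : ∀ i, C ≤ A i) (hg : Red A C i j g)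
    (hc : c ∈ C) : Red A C i j (g * c) := by
  cases hg with
  | single ha ha' =>
    exact .single (Subgroup.mul_mem _ ha (hCA _ hc)) (by rwa [Subgroup.mul_mem_cancel_right _ hc])
  | snoc hg hne ha ha' =>
    rw [mul_assoc]
    exact hg.snoc hne (Subgroup.mul_mem _ ha (hCA _ hc))
      (by rwa [Subgroup.mul_mem_cancel_right _ hc])

theorem Red.mul_mem_or {i j k : Bool} {g x : G} (hCA : ∀ i, C ≤ A i) (hg : Red A C i j g)
    (hx : x ∈ A k) : g * x ∈ C ∨ ∃ j', Red A C i j' (g * x) := by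
  by_cases hxC : x ∈ C
  · exact .inr ⟨j, hg.mul_mem hCA hxC⟩
  by_cases hjk : j = k
  · subst hjk
    cases hg with
    | single ha ha' =>
      by_cases hax : g * x ∈ C
      · exact .inl hax
      · exact .inr ⟨_, .single (Subgroup.mul_mem _ ha hx) hax⟩
    | @snoc _ _ g a hg hne ha ha' =>
      rw [mul_assoc]
      by_cases hax : a * x ∈ C
      · exact .inr ⟨_, hg.mul_mem hCA hax⟩
      · exact .inr ⟨_, hg.snoc hne (Subgroup.mul_mem _ ha hx) hax⟩
  · exact .inr ⟨_, hg.snoc hjk hx hxC⟩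

theorem Red.mem_or_exists_peel {i j : Bool} {g : G} (hg : Red A C i j g) :
    (j = i ∧ g ∈ A i) ∨ ∃ e ∈ A i, ∃ k, k ≠ i ∧ Red A C k j (e⁻¹ * g) := by
  induction hg with
  | single ha ha' => exact .inl ⟨rfl, ha⟩
  | snoc hg hne ha ha' ih =>
    rcases ih with ⟨rfl, hgi⟩ | ⟨e, he, k, hk, hr⟩
    · exact .inr ⟨_, hgi, _, hne.symm, by simpa using Red.single ha ha'⟩
    · refine .inr ⟨e, he, k, hk, ?_⟩
      rw [← mul_assoc]
      exact hr.snoc hne ha ha'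

namespace IsAmalgamatedFreeProduct

theorem le (amal : IsAmalgamatedFreeProduct (A true) (A false) C) : ∀ i, C ≤ A i
  | true => amal.le_left
  | false => amal.le_right

theorem mem_or_exists_red (amal : IsAmalgamatedFreeProduct (A true) (A false) C) (g : G) :
    g ∈ C ∨ ∃ i j, Red A C i j g := by
  have hg : g ∈ Subgroup.closure ((A true : Set G) ∪ A false) := by
    rw [← Subgroup.sup_eq_closure, amal.sup_eq_top]
    trivial
  have step : ∀ x k, ∀ y ∈ A k, (x ∈ C ∨ ∃ i j, Red A C i j x) →
      x * y ∈ C ∨ ∃ i j, Red A C i j (x * y) := by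
    rintro x k y hy (hx | ⟨i, j, hx⟩)
    · by_cases hxy : x * y ∈ C
      · exact .inl hxy
      · exact .inr ⟨k, k, .single (mul_mem (amal.le k hx) hy) hxy⟩
    · exact (hx.mul_mem_or amal.le hy).imp_right fun h => ⟨i, h⟩
  induction hg using Subgroup.closure_induction_right with
  | one => exact .inl (one_mem C)
  | mul_right x _ y hy ih =>
    rcases hy with hy | hy
    · exact step x true y hy ih
    · exact step x false y hy ih
  | mul_inv_cancel x _ y hy ih =>
    rcases hy with hy | hy
    · exact step x true _ (inv_mem hy) ih
    · exact step x false _ (inv_mem hy) ih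

end IsAmalgamatedFreeProduct

/-- Normal form theorem for amalgamated free products. -/
theorem Red.not_mem (amal : IsAmalgamatedFreeProduct (A true) (A false) C) {i j : Bool} {g : G}
    (hg : Red A C i j g) : g ∉ C := by
  let φ : ∀ i, C →* A i := fun i => Subgroup.inclusion (amal.le i)
  obtain ⟨f, hft, hff⟩ := amal.univ (Monoid.PushoutI φ)
    (Monoid.PushoutI.of (φ := φ) true) (Monoid.PushoutI.of (φ := φ) false) fun c hA hB => by
      have hc : c ∈ C := amal.inf_eq ▸ ⟨hA, hB⟩
      exact (Monoid.PushoutI.of_apply_eq_base φ true ⟨c, hc⟩).trans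
        (Monoid.PushoutI.of_apply_eq_base φ false ⟨c, hc⟩).symm
  have hf : ∀ i (a : A i), f a = Monoid.PushoutI.of i a := fun i => by
    cases i
    exacts [hff, hft]
  have hletter : ∀ (i : Bool) (a : A i), (a : G) ∉ C → a ∉ (φ i).range := by
    rintro i a ha ⟨c, rfl⟩
    exact ha c.2
  have key : ∃ w : Monoid.CoprodI.NeWord (fun i => A i) i j,
      (∀ x ∈ w.toList, x.2 ∉ (φ x.1).range) ∧ Monoid.PushoutI.ofCoprodI w.prod = f g := by
    induction hg with
    | @single a ha ha' =>
      refine ⟨.singleton ⟨a, ha⟩ fun h => ha' ?_, ?_, ?_⟩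
      · obtain rfl : a = 1 := congrArg Subtype.val h
        exact one_mem C
      · simpa using hletter i ⟨a, ha⟩ ha'
      · simp [hf i ⟨a, ha⟩]
    | @snoc j k g a hg hne ha ha' ih =>
      obtain ⟨w, hw, hwp⟩ := ih
      refine ⟨w.append hne (.singleton ⟨a, ha⟩ fun h => ha' ?_), ?_, ?_⟩
      · obtain rfl : a = 1 := congrArg Subtype.val h
        exact one_mem C
      · simp only [Monoid.CoprodI.NeWord.toList, List.mem_append, List.mem_singleton]
        rintro x (hx | rfl)
        · exact hw x hx
        · exact hletter k ⟨a, ha⟩ ha'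
      · simp [hwp, hf k ⟨a, ha⟩]
  obtain ⟨w, hw, hwp⟩ := key
  intro hgC
  have hempty := Monoid.PushoutI.Reduced.eq_empty_of_mem_range (φ := φ)
    (fun i => Subgroup.inclusion_injective _) (w := w.toWord) hw ⟨⟨g, hgC⟩, by
      rw [← Monoid.PushoutI.of_apply_eq_base φ i, ← hf]
      exact hwp.symm⟩
  exact w.toList_ne_nil (congrArg Monoid.CoprodI.Word.toList hempty)

theorem Red.fst_unique (amal : IsAmalgamatedFreeProduct (A true) (A false) C)
    {i j i' j' : Bool} {g : G} (hg : Red A C i j g) (hg' : Red A C i' j' g) : i = i' := by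
  by_contra hne
  refine (hg.inv.concat hg' hne).not_mem amal ?_
  simp

/-- `a` and `b` are joined by a path in `V` whose steps are elements of the factors. -/
def Linked (A : Bool → Subgroup G) (V : Set G) : G → G → Prop :=
  Relation.ReflTransGen fun x y => x ∈ V ∧ y ∈ V ∧ ∃ k, x⁻¹ * y ∈ A k

theorem Linked.symm {V : Set G} {a b : G} (h : Linked A V a b) : Linked A V b a := by
  have hsymm : Std.Symm fun x y => x ∈ V ∧ y ∈ V ∧ ∃ k, x⁻¹ * y ∈ A k :=
    ⟨fun x y ⟨hx, hy, k, hk⟩ => ⟨hy, hx, k, by simpa using inv_mem hk⟩⟩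
  exact Relation.ReflTransGen.stdSymm.symm _ _ h

theorem Linked.exists_mem (hCA : ∀ i, C ≤ A i) {V : Set G} {a b g : G} (h : Linked A V a b)
    {k l : Bool} (hb : Red A C k l (g⁻¹ * b)) (ha : ∀ l, ¬ Red A C k l (g⁻¹ * a)) :
    ∃ v ∈ V, g⁻¹ * v ∈ C := by
  induction h generalizing l with
  | refl => exact (ha l hb).elim
  | @tail b c _ hbc ih =>
    obtain ⟨hbV, -, m, hm⟩ := hbc
    rcases hb.mul_mem_or hCA (inv_mem hm) with h | ⟨l', h⟩
    · exact ⟨b, hbV, by simpa [mul_assoc] using h⟩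
    · exact ih (by simpa [mul_assoc] using h)

theorem linked_of_steps {γ : ℕ → G} {s e : ℕ} (hse : s ≤ e)
    (hγ : ∀ t, s ≤ t → t < e → ∃ k, (γ t)⁻¹ * γ (t + 1) ∈ A k) :
    Linked A (γ '' Set.Icc s e) (γ s) (γ e) := by
  suffices ∀ e', s ≤ e' → e' ≤ e → Linked A (γ '' Set.Icc s e) (γ s) (γ e') from
    this e hse le_rfl
  intro e' hs he
  induction e', hs using Nat.le_induction with
  | base => exact .refl
  | succ t hs ih =>
    exact (ih (by omega)).tail ⟨⟨t, ⟨hs, by omega⟩, rfl⟩, ⟨t + 1, ⟨by omega, he⟩, rfl⟩,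
      hγ t hs (by omega)⟩

/-- A reduced product, as a sequence of partial products. -/
theorem Red.exists_seq {i j : Bool} {h : G} (hh : Red A C i j h) :
    ∃ (N : ℕ) (g : ℕ → G) (ι : ℕ → Bool), g 0 = 1 ∧ g (N + 1) = h ∧ ι N = j ∧
      (∀ k ≤ N, (g k)⁻¹ * g (k + 1) ∈ A (ι k) ∧ (g k)⁻¹ * g (k + 1) ∉ C) ∧
      ∀ k < N, ι k ≠ ι (k + 1) := by
  induction hh with
  | @single a ha ha' =>
    exact ⟨0, fun n => if n = 0 then 1 else a, fun _ => i, by simp, by simp, rfl,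
      by simpa using ⟨ha, ha'⟩, by simp⟩
  | @snoc j k h a _ hne ha ha' ih =>
    obtain ⟨N, g, ι, h₀, h₁, h₂, h₃, h₄⟩ := ih
    refine ⟨N + 1, fun n => if n ≤ N + 1 then g n else h * a, fun n => if n ≤ N then ι n else k,
      by simp [h₀], by simp, by simp, fun n hn => ?_, fun n hn => ?_⟩
    · rcases hn.lt_or_eq with hn | rfl
      · have : n ≤ N := by omega
        simpa [hn.le, this] using h₃ n this
      · simpa [h₁] using ⟨ha, ha'⟩
    · have : n ≤ N := by omega
      rcases this.lt_or_eq with hn' | rfl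
      · simpa [this, hn'] using h₄ n hn'
      · simpa [h₂] using hne

theorem red_of_seq {N : ℕ} {g : ℕ → G} {ι : ℕ → Bool}
    (h₁ : ∀ k ≤ N, (g k)⁻¹ * g (k + 1) ∈ A (ι k) ∧ (g k)⁻¹ * g (k + 1) ∉ C)
    (h₂ : ∀ k < N, ι k ≠ ι (k + 1)) {k l : ℕ} (hkl : k ≤ l) (hl : l ≤ N) :
    Red A C (ι k) (ι l) ((g k)⁻¹ * g (l + 1)) := by
  induction l, hkl using Nat.le_induction with
  | base => exact .single (h₁ k hl).1 (h₁ k hl).2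
  | succ l hkl ih =>
    have := (ih (by omega)).snoc (h₂ l (by omega)) (h₁ _ hl).1 (h₁ _ hl).2
    simpa [mul_assoc] using this

/-- Every path from `1` to `h` visits all the cosets of `C` separating `1` from `h`. -/
theorem IsAmalgamatedFreeProduct.exists_seq
    (amal : IsAmalgamatedFreeProduct (A true) (A false) C) {V W : Set G} {h : G}
    (hV : Linked A V 1 h) (hW : Linked A W 1 h) (hV₁ : 1 ∈ V) (hVh : h ∈ V) (hW₁ : 1 ∈ W)
    (hWh : h ∈ W) (hh : h ∉ C) :
    ∃ (N : ℕ) (q p : ℕ → G) (ι : ℕ → Bool), 0 < N ∧ q 0 = 1 ∧ p 0 = 1 ∧ q N = h ∧ p N = h ∧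
      (∀ k ≤ N, q k ∈ V ∧ p k ∈ W ∧ (q k)⁻¹ * p k ∈ C) ∧
      (∀ k < N, (q k)⁻¹ * q (k + 1) ∈ A (ι k)) ∧
      ∀ k l, k < l → l ≤ N → (q k)⁻¹ * q l ∉ C := by
  obtain ⟨i, j, hr⟩ := (amal.mem_or_exists_red h).resolve_left hh
  obtain ⟨N, g, ι, h₀, h₁, -, h₃, h₄⟩ := hr.exists_seq
  have visit : ∀ {U : Set G}, Linked A U 1 h → 1 ∈ U → h ∈ U → ∀ k ≤ N + 1, ∃ q ∈ U,
      (g k)⁻¹ * q ∈ C ∧ (k = 0 → q = 1) ∧ (k = N + 1 → q = h) := by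
    intro U hU hU₁ hUh k hk
    rcases Nat.eq_zero_or_pos k with rfl | hk₀
    · exact ⟨1, hU₁, by simp [h₀, one_mem], fun _ => rfl, by omega⟩
    rcases hk.lt_or_eq with hk₁ | rfl
    · have hr₁ := red_of_seq h₃ h₄ (show k ≤ N by omega) le_rfl
      have hr₂ := (red_of_seq h₃ h₄ (Nat.zero_le (k - 1)) (by omega)).inv
      rw [h₀, Nat.sub_add_cancel hk₀, inv_one, one_mul] at hr₂
      rw [h₁] at hr₁
      have hne := h₄ (k - 1) (by omega)
      rw [Nat.sub_add_cancel hk₀] at hne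
      obtain ⟨v, hv, hvC⟩ := hU.exists_mem amal.le hr₁ fun l hl =>
        hne (Red.fst_unique amal hr₂ (by simpa using hl))
      exact ⟨v, hv, hvC, by omega, by omega⟩
    · exact ⟨h, hUh, by simp [h₁, one_mem], by omega, fun _ => rfl⟩
  choose! q hq hqC hq₀ hqN using visit hV hV₁ hVh
  choose! p hp hpC hp₀ hpN using visit hW hW₁ hWh
  refine ⟨N + 1, q, p, ι, by omega, hq₀ 0 (by omega) rfl, hp₀ 0 (by omega) rfl,
    hqN _ le_rfl rfl, hpN _ le_rfl rfl, fun k hk => ⟨hq k hk, hp k hk, ?_⟩, fun k hk => ?_,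
    fun k l hkl hl => ?_⟩
  · simpa [mul_assoc] using mul_mem (inv_mem (hqC k hk)) (hpC k hk)
  · have e₁ := amal.le (ι k) (hqC k hk.le)
    have e₂ := amal.le (ι k) (hqC (k + 1) hk)
    have e₃ := (h₃ k (by omega)).1
    simpa [mul_assoc] using mul_mem (mul_mem (inv_mem e₁) e₃) e₂
  · intro hmem
    have hr := red_of_seq h₃ h₄ (show k ≤ l - 1 by omega) (by omega)
    rw [show l - 1 + 1 = l by omega] at hr
    refine hr.not_mem amal ?_
    simpa [mul_assoc] using
      mul_mem (mul_mem (hqC k (by omega)) hmem) (inv_mem (hqC l hl))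

end Amalgam

section Factors

variable {G : Type u} [Group G] {A : Bool → Subgroup G} {C : Subgroup G} {X : Set G} {D : ℕ}

theorem IsAmalgamatedFreeProduct.exists_hypMetric
    (amal : IsAmalgamatedFreeProduct (A true) (A false) C) (hG : IsWordHyperbolic G)
    (hA : ∀ i, ∃ Y : Set (A i), IsSymmGen Y) :
    ∃ X : Set G, IsSymmGen X ∧ (∀ x ∈ X, ∃ k, x ∈ A k) ∧ ∃ D, HypMetric (wordDist X) D := by
  choose Y hY using hA
  let X : Set G := ⋃ i, (A i).subtype '' Y i
  have hX : IsSymmGen X := by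
    refine ⟨Set.finite_iUnion fun i => (hY i).1.image _, fun x hx => ?_, ?_⟩
    · obtain ⟨i, y, hy, rfl⟩ := Set.mem_iUnion.1 hx
      exact Set.mem_iUnion.2 ⟨i, y⁻¹, (hY i).2.1 y hy, by simp⟩
    · have hle : ∀ i, A i ≤ Subgroup.closure X := by
        intro i
        have : Subgroup.closure ((A i).subtype '' Y i) = A i := by
          rw [← MonoidHom.map_closure, (hY i).2.2, ← MonoidHom.range_eq_map, Subgroup.range_subtype]
        rw [← this]
        exact Subgroup.closure_mono (Set.subset_iUnion (fun i => (A i).subtype '' Y i) i)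
      rw [eq_top_iff, ← amal.sup_eq_top]
      exact sup_le (hle _) (hle _)
  refine ⟨X, hX, fun x hx => ?_, ?_⟩
  · obtain ⟨i, y, -, rfl⟩ := Set.mem_iUnion.1 hx
    exact ⟨i, y.2⟩
  · obtain ⟨X₀, hX₀, D, h⟩ := hG.exists_hypMetric
    obtain ⟨L, hL⟩ := hX₀.exists_wordLength_hom_le hX (MonoidHom.id G)
    exact h.exists_hypMetric_of_hom hX₀ hX (MonoidHom.id G) (c := L)
      fun k => (hL k).trans (Nat.le_add_right _ _)

theorem linked_of_isGeod (hX : IsSymmGen X) (hXA : ∀ x ∈ X, ∃ k, x ∈ A k) {γ : ℕ → G}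
    {n s e : ℕ} (hγ : IsGeod (wordDist X) γ n) (hse : s ≤ e) (he : e ≤ n) :
    Linked A (γ '' Set.Icc s e) (γ s) (γ e) := by
  refine linked_of_steps hse fun t _ ht => hXA _ (hX.mem_of_wordLength_eq_one ?_)
  have := hγ t (t + 1) (by omega) (by omega)
  rw [wordDist] at this
  omega

/-- The factors are quasiconvex if the amalgamated subgroup is. -/
theorem IsAmalgamatedFreeProduct.qc_factor
    (amal : IsAmalgamatedFreeProduct (A true) (A false) C) (hX : IsSymmGen X)
    (hXA : ∀ x ∈ X, ∃ k, x ∈ A k) {R : ℕ} (hC : QC (wordDist X) R (C : Set G)) (i : Bool) :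
    QC (wordDist X) R (A i : Set G) := by
  intro x hx y hy p hp
  by_cases hpA : x⁻¹ * p ∈ A i
  · exact ⟨p, by simpa using mul_mem hx hpA, by simp [wordDist_self]⟩
  obtain ⟨e, he, k, hk, l, hr⟩ : ∃ e ∈ A i, ∃ k, k ≠ i ∧ ∃ l, Red A C k l (e⁻¹ * p) := by
    obtain ⟨k, l, hr⟩ := (amal.mem_or_exists_red (x⁻¹ * p)).resolve_left
      fun h => hpA (amal.le i h)
    by_cases hk : k = i
    · subst hk
      rcases hr.mem_or_exists_peel with ⟨-, hmem⟩ | ⟨e, he, m, hm, hr'⟩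
      · exact (hpA hmem).elim
      · exact ⟨x * e, mul_mem hx he, m, hm, l, by simpa [mul_assoc] using hr'⟩
    · exact ⟨x, hx, k, hk, l, hr⟩
  have hout : ∀ a ∈ A i, ∀ l, ¬ Red A C k l (e⁻¹ * a) := fun a ha l hl =>
    hk (hl.fst_unique amal (.single (mul_mem (inv_mem he) ha) (hl.not_mem amal)))
  obtain ⟨γ, h₀, h₁, h₂, hγ⟩ := hX.geodMetric.exists_isGeod_through hp
  have l₁ := linked_of_isGeod hX hXA hγ (Nat.zero_le (wordDist X x p)) (by omega)
  have l₂ := linked_of_isGeod hX hXA hγ (show wordDist X x p ≤ wordDist X x y by omega) le_rfl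
  rw [h₀, h₁] at l₁
  rw [h₁, h₂] at l₂
  obtain ⟨_, ⟨s, ⟨-, hs⟩, rfl⟩, hsC⟩ := l₁.exists_mem amal.le hr (hout x hx)
  obtain ⟨_, ⟨t, ⟨ht, ht'⟩, rfl⟩, htC⟩ := l₂.symm.exists_mem amal.le hr (hout y hy)
  obtain ⟨c, hc, hpc⟩ := hC.mul_left e⁻¹ (γ s) hsC (γ t) htC p (by
    have g₁ := hγ s (wordDist X x p) hs (by omega)
    have g₂ := hγ (wordDist X x p) t ht (by omega)
    have g₃ := hγ s t (by omega) (by omega)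
    rw [h₁] at g₁ g₂
    omega)
  exact ⟨c, by simpa using mul_mem he (amal.le i hc), hpc⟩

theorem QC.exists_qc_of_isQuasiconvex (h : HypMetric (wordDist X) D) (hX : IsSymmGen X)
    {B K : Subgroup G} {R : ℕ} (hB : QC (wordDist X) R (B : Set G)) (hKB : K ≤ B)
    (hK : IsQuasiconvex (K.subgroupOf B)) : ∃ R', QC (wordDist X) R' (K : Set G) := by
  obtain ⟨Y, hY, X', hX', c, hc, hdist⟩ := hK
  obtain ⟨Z, hZ, hZX⟩ := hB.exists_isSymmGen hX
  obtain ⟨L, hL⟩ := hZ.exists_wordLength_hom_le hX' (MonoidHom.id B)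
  obtain ⟨N, hN⟩ := exists_nat_ge c
  have hrange : Set.range (B.subtype.comp (K.subgroupOf B).subtype) = K := by
    ext x
    constructor
    · rintro ⟨y, rfl⟩
      exact y.2
    · exact fun hx => ⟨⟨⟨x, hKB hx⟩, hx⟩, rfl⟩
  rw [← hrange]
  refine h.exists_qc_range hX hY (B.subtype.comp (K.subgroupOf B).subtype) (c := N * (L + 1))
    fun k => ?_
  have h₁ : wordLength Y k ≤ N * wordLength X' (k : B) + N := by
    have : (wordLength Y k : ℝ) ≤ N * wordLength X' (k : B) + N := by
      refine (hdist k).trans ?_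
      gcongr
    exact_mod_cast this
  have h₂ : wordLength X' (k : B) ≤ L * (wordLength X ((k : B) : G) + 1) :=
    (hL k).trans (Nat.mul_le_mul_left L (hZX k))
  have h₃ := Nat.mul_le_mul_left N h₂
  refine h₁.trans ((Nat.add_le_add_right h₃ N).trans ?_)
  change _ ≤ N * (L + 1) * wordLength X ((k : B) : G) + N * (L + 1)
  nlinarith [Nat.zero_le (N * wordLength X ((k : B) : G))]

end Factors

section Uniform

variable {G : Type*} [Group G] {X : Set G} {D : ℕ} {H : Subgroup G}

theorem QC.mono {α : Type*} {d : α → α → ℕ} {R R' : ℕ} {S : Set α} (hS : QC d R S)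
    (hR : R ≤ R') : QC d R' S := fun x hx y hy p hp => (hS x hx y hy p hp).mono hR

theorem Set.Finite.exists_nat_uniform {α : Type*} {F : Set α} (hF : F.Finite) {P : α → ℕ → Prop}
    (mono : ∀ a m n, m ≤ n → P a m → P a n) (hP : ∀ a ∈ F, ∃ n, P a n) :
    ∃ n, ∀ a ∈ F, P a n := by
  choose! f hf using hP
  obtain ⟨n, hn⟩ := (hF.image f).bddAbove
  exact ⟨n, fun a ha => mono a _ _ (hn ⟨a, ha, rfl⟩) (hf a ha)⟩

/-- Bounds invariant under left translation by `H` are uniform near `H`. -/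
theorem IsSymmGen.exists_uniform_near (hX : IsSymmGen X) {P : G → ℕ → Prop} (r : ℕ)
    (mono : ∀ q m n, m ≤ n → P q m → P q n) (hH : ∀ h ∈ H, ∀ q n, P q n → P (h * q) n)
    (hP : ∀ q, ∃ n, P q n) : ∃ n, ∀ q, Near (wordDist X) r H q → P q n := by
  obtain ⟨n, hn⟩ := (hX.finite_ball r).exists_nat_uniform mono fun q _ => hP q
  refine ⟨n, fun q hq => ?_⟩
  obtain ⟨s, hs, hqs⟩ := hq
  rw [hX.wordDist_comm] at hqs
  simpa using hH s hs _ n (hn (s⁻¹ * q) hqs)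

theorem near_subgroup_mul_left {r : ℕ} {g x : G} (hg : g ∈ H) (hx : Near (wordDist X) r H x) :
    Near (wordDist X) r H (g * x) := by
  obtain ⟨s, hs, hxs⟩ := hx
  exact ⟨g * s, mul_mem hg hs, by rwa [wordDist_mul_left]⟩

theorem mem_map_conj_inv {q x : G} :
    x ∈ H.map (MulAut.conj q⁻¹).toMonoidHom ↔ q * x * q⁻¹ ∈ H := by
  constructor
  · rintro ⟨y, hy, rfl⟩
    simpa [mul_assoc] using hy
  · exact fun hx => ⟨_, hx, by simp [mul_assoc]⟩

theorem map_conj_inv_mul_left {g : G} (hg : g ∈ H) (q : G) :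
    H.map (MulAut.conj (g * q)⁻¹).toMonoidHom = H.map (MulAut.conj q⁻¹).toMonoidHom := by
  ext x
  rw [mem_map_conj_inv, mem_map_conj_inv]
  rw [show g * q * x * (g * q)⁻¹ = g * (q * x * q⁻¹) * g⁻¹ by group,
    Subgroup.mul_mem_cancel_right _ (inv_mem hg), Subgroup.mul_mem_cancel_left _ hg]

theorem Near.conj (hX : IsSymmGen X) {r : ℕ} {x : G} (hx : Near (wordDist X) r H x) (q : G) :
    Near (wordDist X) (r + wordLength X q) (H.map (MulAut.conj q⁻¹).toMonoidHom) (q⁻¹ * x) := by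
  obtain ⟨s, hs, hxs⟩ := hx
  refine ⟨q⁻¹ * (s * q), mem_map_conj_inv.2 (by simpa [mul_assoc] using hs), ?_⟩
  rw [wordDist_mul_left]
  have h₁ := hX.wordDist_triangle x s (s * q)
  rw [show wordDist X s (s * q) = wordLength X q by simp [wordDist]] at h₁
  omega

theorem Near.of_conj (hX : IsSymmGen X) {r : ℕ} {q x : G}
    (hx : Near (wordDist X) r (H.map (MulAut.conj q⁻¹).toMonoidHom) (q⁻¹ * x)) :
    Near (wordDist X) (r + wordLength X q) H x := by
  obtain ⟨s, hs, hxs⟩ := hx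
  refine ⟨q * s * q⁻¹, mem_map_conj_inv.1 hs, ?_⟩
  have h₁ := hX.wordDist_triangle x (q * s) (q * s * q⁻¹)
  rw [show wordDist X (q * s) (q * s * q⁻¹) = wordLength X q by
    rw [wordDist, inv_mul_cancel_left, hX.wordLength_inv]] at h₁
  rw [← wordDist_mul_left q, mul_inv_cancel_left] at hxs
  omega

/-- Points near two subgroups with finite intersection are bounded. -/
theorem IsSymmGen.exists_bound_of_finite_inf (hX : IsSymmGen X) {P Q : Subgroup G}
    (hPQ : ((P ⊓ Q : Subgroup G) : Set G).Finite) (r : ℕ) :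
    ∃ B, ∀ g, Near (wordDist X) r P g → Near (wordDist X) r Q g → wordDist X 1 g ≤ B := by
  obtain ⟨R, hR⟩ := hX.exists_near_inf P Q r
  obtain ⟨M, hM⟩ := exists_wordLength_bound_of_finite X hPQ
  refine ⟨M + R, fun g hgP hgQ => ?_⟩
  obtain ⟨s, hs, hgs⟩ := hR g hgP hgQ
  have h₁ := hX.wordDist_triangle 1 s g
  have h₂ := hM s hs
  rw [hX.wordDist_comm s g, wordDist_one_left s] at h₁
  omega

end Uniform

section Local

variable {G : Type u} [Group G] {A : Bool → Subgroup G} {C H : Subgroup G} {X : Set G} {D : ℕ}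
  {z : G}

theorem exists_corner (h : HypMetric (wordDist X) D) (hX : IsSymmGen X) {R : ℕ}
    (hC : QC (wordDist X) R (C : Set G))
    (hH : ∀ (q : G) (i : Bool), ∃ R,
      QC (wordDist X) R ((H.map (MulAut.conj q⁻¹).toMonoidHom ⊓ A i : Subgroup G) : Set G))
    (r : ℕ) :
    ∃ B, ∀ q, Near (wordDist X) r H q →
      ((H.map (MulAut.conj q⁻¹).toMonoidHom ⊓ C : Subgroup G) : Set G).Finite →
      ∀ i p x, q⁻¹ * p ∈ C → q⁻¹ * x ∈ A i → Near (wordDist X) r H x →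
        wordDist X q p + wordDist X q x ≤ wordDist X p x + B := by
  refine hX.exists_uniform_near r (P := fun q B =>
      ((H.map (MulAut.conj q⁻¹).toMonoidHom ⊓ C : Subgroup G) : Set G).Finite →
      ∀ i p x, q⁻¹ * p ∈ C → q⁻¹ * x ∈ A i → Near (wordDist X) r H x →
        wordDist X q p + wordDist X q x ≤ wordDist X p x + B)
    (fun q m n hmn hm hfin i p x hp hx hxH => (hm hfin i p x hp hx hxH).trans (by omega))
    (fun g hg q n hn hfin i p x hp hx hxH => ?_) fun q => ?_
  · rw [map_conj_inv_mul_left hg] at hfin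
    have := hn hfin i (g⁻¹ * p) (g⁻¹ * x) (by simpa [mul_assoc] using hp)
      (by simpa [mul_assoc] using hx) (near_subgroup_mul_left (inv_mem hg) hxH)
    rw [wordDist_mul_left, ← wordDist_mul_left g q, ← wordDist_mul_left g q] at this
    simpa using this
  · by_cases hfin : ((H.map (MulAut.conj q⁻¹).toMonoidHom ⊓ C : Subgroup G) : Set G).Finite
    swap
    · exact ⟨0, fun h => (hfin h).elim⟩
    set K := H.map (MulAut.conj q⁻¹).toMonoidHom with hK
    have key : ∀ i, ∃ B, ∀ p x, q⁻¹ * p ∈ C → q⁻¹ * x ∈ A i → Near (wordDist X) r H x →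
        wordDist X q p + wordDist X q x ≤ wordDist X p x + B := by
      intro i
      obtain ⟨R₁, hR₁⟩ := hH q i
      obtain ⟨r₁, hr₁⟩ := hX.exists_near_inf K (A i) (r + wordLength X q)
      have hfin' : ((C ⊓ (K ⊓ A i) : Subgroup G) : Set G).Finite :=
        hfin.subset fun y hy => ⟨hy.2.1, hy.1⟩
      obtain ⟨B, hB⟩ := hX.exists_bound_of_finite_inf hfin'
        (max R R₁ + (D + 2 + 4 * r₁ + D))
      refine ⟨2 * B + 2, fun p x hp hx hxH => ?_⟩
      have := h.diverge (hC.mono (le_max_left R R₁)) (hR₁.mono (le_max_right R R₁))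
        (w := 1) (h.near_of_mem (one_mem C)) (h.near_of_mem hp)
        (h.near_of_mem (one_mem (K ⊓ A i))) (hr₁ _ (hxH.conj hX q) (h.near_of_mem hx)) hB
      rw [wordDist_mul_left, ← wordDist_mul_left q 1, ← wordDist_mul_left q 1] at this
      simpa using this
    choose B hB using key
    refine ⟨max (B true) (B false), fun _ i p x hp hx hxH => (hB i p x hp hx hxH).trans ?_⟩
    cases i <;> simp

theorem VirtCyclicBy.exists_corner_of_not_par (hz : VirtCyclicBy C z)
    (h : HypMetric (wordDist X) D) (hX : IsSymmGen X) (K : ℕ) :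
    ∃ B, ∀ q q', wordDist X q q' ≤ K → ¬ Par z q q' → ∀ p p', q⁻¹ * p ∈ C → q'⁻¹ * p' ∈ C →
      wordDist X q p + wordDist X q p' ≤ wordDist X p p' + B := by
  obtain ⟨R, hC⟩ := hz.exists_qc h hX
  obtain ⟨B, hB⟩ := (hX.finite_ball K).exists_nat_uniform (P := fun g B => ¬ Par z 1 g →
    ∀ p p', p ∈ C → g⁻¹ * p' ∈ C → wordDist X 1 p + wordDist X 1 p' ≤ wordDist X p p' + B)
    (fun g m n hmn hm hg p p' hp hp' => (hm hg p p' hp hp').trans (by omega)) fun g _ => by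
      by_cases hg : Par z 1 g
      · exact ⟨0, fun h => (h hg).elim⟩
      have hfin : ((C ⊓ C.map (MulAut.conj g⁻¹⁻¹).toMonoidHom : Subgroup G) : Set G).Finite :=
        hz.finite_of_not_par hg _ fun x hx =>
          ⟨hx.1, by simpa using mem_map_conj_inv.1 hx.2⟩
      obtain ⟨B, hB⟩ := hX.exists_bound_of_finite_inf hfin
        (R + (D + 2 + 4 * wordLength X g + D) + wordLength X g)
      refine ⟨2 * B + 2, fun _ p p' hp hp' => ?_⟩
      refine h.diverge hC (hC.mul_left g⁻¹) (w := 1) (r := wordLength X g)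
        (h.near_of_mem (one_mem C)) (h.near_of_mem hp) ⟨g, by simp [one_mem], ?_⟩
        (h.near_of_mem hp') fun y hyS hyT => hB y (hyS.mono (by omega)) ?_
      · rw [wordDist_one_left]
      · have := (near_mul_left hyT).conj hX g⁻¹
        have e : g⁻¹⁻¹ * (g⁻¹ * y) = y := by simp
        rwa [e, hX.wordLength_inv] at this
  refine ⟨B, fun q q' hqq hpar p p' hp hp' => ?_⟩
  have := hB (q⁻¹ * q') hqq (fun hpar' => hpar ?_) (q⁻¹ * p) (q⁻¹ * p') hp
    (by simpa [mul_assoc] using hp')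
  · rw [wordDist_mul_left, ← wordDist_mul_left q 1, ← wordDist_mul_left q 1] at this
    simpa using this
  · simpa using (par_mul_left q).2 hpar'

theorem VirtCyclicBy.exists_near_of_coset (hz : VirtCyclicBy C z) (hX : IsSymmGen X)
    (H : Subgroup G) (r : ℕ) :
    ∃ r', ∀ q, Near (wordDist X) r H q →
      ¬ ((H.map (MulAut.conj q⁻¹).toMonoidHom ⊓ C : Subgroup G) : Set G).Finite →
      ∀ p, q⁻¹ * p ∈ C → Near (wordDist X) r' H p := by
  refine hX.exists_uniform_near r (P := fun q r' =>
      ¬ ((H.map (MulAut.conj q⁻¹).toMonoidHom ⊓ C : Subgroup G) : Set G).Finite →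
      ∀ p, q⁻¹ * p ∈ C → Near (wordDist X) r' H p)
    (fun q m n hmn hm hinf p hp => (hm hinf p hp).mono hmn)
    (fun g hg q n hn hinf p hp => ?_) fun q => ?_
  · rw [map_conj_inv_mul_left hg] at hinf
    simpa using near_subgroup_mul_left hg
      (hn hinf (g⁻¹ * p) (by simpa [mul_assoc] using hp))
  · by_cases hfin : ((H.map (MulAut.conj q⁻¹).toMonoidHom ⊓ C : Subgroup G) : Set G).Finite
    · exact ⟨0, fun h => (h hfin).elim⟩
    · obtain ⟨r', hr'⟩ := hz.exists_near_of_infinite hX hfin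
      exact ⟨_, fun _ p hp => (hr' _ hp).of_conj hX⟩

theorem exists_near_of_between (h : HypMetric (wordDist X) D) (hX : IsSymmGen X)
    (hH : ∀ (q : G) (i : Bool), ∃ R,
      QC (wordDist X) R ((H.map (MulAut.conj q⁻¹).toMonoidHom ⊓ A i : Subgroup G) : Set G))
    (r e : ℕ) :
    ∃ r', ∀ q, Near (wordDist X) r H q → ∀ i y x, q⁻¹ * y ∈ A i → Near (wordDist X) r H y →
      wordDist X q x + wordDist X x y ≤ wordDist X q y + e → Near (wordDist X) r' H x := by
  refine hX.exists_uniform_near r (P := fun q r' => ∀ i y x, q⁻¹ * y ∈ A i →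
      Near (wordDist X) r H y → wordDist X q x + wordDist X x y ≤ wordDist X q y + e →
      Near (wordDist X) r' H x)
    (fun q m n hmn hm i y x hy hyH hx => (hm i y x hy hyH hx).mono hmn)
    (fun g hg q n hn i y x hy hyH hx => ?_) fun q => ?_
  · have := near_subgroup_mul_left hg (hn i (g⁻¹ * y) (g⁻¹ * x) (by simpa [mul_assoc] using hy)
      (near_subgroup_mul_left (inv_mem hg) hyH) ?_)
    · simpa using this
    · rw [wordDist_mul_left, ← wordDist_mul_left g q, ← wordDist_mul_left g q]
      simpa using hx
  · set K := H.map (MulAut.conj q⁻¹).toMonoidHom with hK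
    have key : ∀ i, ∃ r', ∀ y x, q⁻¹ * y ∈ A i → Near (wordDist X) r H y →
        wordDist X q x + wordDist X x y ≤ wordDist X q y + e → Near (wordDist X) r' H x := by
      intro i
      obtain ⟨R₁, hR₁⟩ := hH q i
      obtain ⟨r₁, hr₁⟩ := hX.exists_near_inf K (A i) (r + wordLength X q)
      refine ⟨R₁ + (e + 4 * r₁ + D) + wordLength X q, fun y x hy hyH hx => ?_⟩
      have hnear := hR₁.near h (x := 1) (h.near_of_mem (one_mem (K ⊓ A i)))
        (hr₁ _ (hyH.conj hX q) (h.near_of_mem hy)) (p := q⁻¹ * x) (e := e) ?_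
      · obtain ⟨s, hs, hxs⟩ := hnear
        exact Near.of_conj hX ⟨s, hs.1, hxs⟩
      · rw [wordDist_mul_left, ← wordDist_mul_left q 1, ← wordDist_mul_left q 1]
        simpa using hx
    choose r' hr' using key
    refine ⟨max (r' true) (r' false), fun i y x hy hyH hx => (hr' i y x hy hyH hx).mono ?_⟩
    cases i <;> simp

end Local

section Global

variable {G : Type u} [Group G] {A : Bool → Subgroup G} {C H : Subgroup G} {X : Set G} {D : ℕ}
  {z : G}

theorem Linked.mono {V W : Set G} {a b : G} (h : Linked A V a b) (hVW : V ⊆ W) :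
    Linked A W a b :=
  Relation.ReflTransGen.mono (fun _ _ h => ⟨hVW h.1, hVW h.2.1, h.2.2⟩) _ _ h

theorem Linked.mul_left {V : Set G} {a b g : G} (h : Linked A V a b)
    (hV : ∀ x ∈ V, g * x ∈ V) : Linked A V (g * a) (g * b) :=
  Relation.ReflTransGen.lift (g * ·)
    (fun x y h => ⟨hV _ h.1, hV _ h.2.1, by simpa [mul_assoc] using h.2.2⟩) _ _ h

/-- A finitely generated subgroup has a connected neighbourhood. -/
theorem Subgroup.FG.exists_linked (hH : H.FG) (hX : IsSymmGen X)
    (hXA : ∀ x ∈ X, ∃ k, x ∈ A k) :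
    ∃ r, ∀ g ∈ H, Linked A {x | Near (wordDist X) r H x} 1 g := by
  obtain ⟨S, rfl⟩ := hH
  obtain ⟨r, hr⟩ := exists_wordLength_bound_of_finite X S.finite_toSet
  have hS : ∀ s ∈ S, Linked A {x | Near (wordDist X) r (Subgroup.closure (S : Set G)) x} 1 s := by
    intro s hs
    obtain ⟨γ, h₀, h₁, hγ⟩ := hX.geodMetric.exists_isGeod 1 s
    have hl := linked_of_isGeod hX hXA hγ (Nat.zero_le _) le_rfl
    rw [h₀, h₁] at hl
    refine hl.mono ?_
    rintro _ ⟨t, ⟨-, ht⟩, rfl⟩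
    refine ⟨1, one_mem _, ?_⟩
    have h₂ := hγ 0 t (Nat.zero_le _) ht
    have h₃ := hr s hs
    rw [h₀] at h₂
    rw [wordDist_one_left] at ht
    rw [hX.wordDist_comm]
    omega
  refine ⟨r, fun g hg => ?_⟩
  induction hg using Subgroup.closure_induction_right with
  | one => exact .refl
  | mul_right x hx y hy ih =>
    have := (hS y hy).mul_left fun w hw => near_subgroup_mul_left hx hw
    rw [mul_one] at this
    exact Relation.ReflTransGen.trans ih this
  | mul_inv_cancel x hx y hy ih =>
    have hxy := mul_mem hx (inv_mem (Subgroup.subset_closure hy))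
    have := ((hS y hy).mul_left fun w hw => near_subgroup_mul_left hxy hw).symm
    rw [mul_one, inv_mul_cancel_right] at this
    exact Relation.ReflTransGen.trans ih this

/-- A run of parallel cosets is short, so a sequence all of whose points are near `γ` or start a
short step to a parallel coset stays near `γ`. -/
theorem near_of_forall_near_or_par (hX : IsSymmGen X) {T : Set G} (hT : T.Finite)
    (hTC : ∀ g, Par z 1 g → ∃ t ∈ T, g⁻¹ * t ∈ C) {V : Set G} {q : ℕ → G} {N E K : ℕ}
    (hq : ∀ k l, k < l → l ≤ N → (q k)⁻¹ * q l ∉ C)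
    (hstep : ∀ j ≤ N, Near (wordDist X) E V (q j) ∨
      j < N ∧ wordDist X (q j) (q (j + 1)) ≤ K ∧ Par z (q j) (q (j + 1))) {j : ℕ} (hj : j ≤ N) :
    Near (wordDist X) (E + (T.ncard + 1) * K) V (q j) := by
  have claim : ∀ m, Near (wordDist X) (E + m * K) V (q j) ∨
      j + m ≤ N ∧ wordDist X (q j) (q (j + m)) ≤ m * K ∧
        ∀ i < m, Par z (q j) (q (j + i + 1)) := by
    intro m
    induction m with
    | zero => exact .inr ⟨hj, by simp [wordDist_self], by simp⟩
    | succ m ih =>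
      rw [Nat.succ_mul]
      rcases ih with ih | ⟨hm, hd, hpar⟩
      · exact .inl (ih.mono (by omega))
      rcases hstep (j + m) hm with ⟨v, hv, hqv⟩ | ⟨hlt, hd', hpar'⟩
      · have := hX.wordDist_triangle (q j) (q (j + m)) v
        exact .inl ⟨v, hv, by omega⟩
      · have := hX.wordDist_triangle (q j) (q (j + m)) (q (j + m + 1))
        refine .inr ⟨hlt, by rw [← add_assoc]; omega, fun i hi => ?_⟩
        rcases Nat.lt_succ_iff_lt_or_eq.1 hi with hi | rfl
        · exact hpar i hi
        · rcases i with _ | i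
          · exact hpar'
          · exact (hpar i (by omega)).trans hpar'
  refine (claim (T.ncard + 1)).resolve_right fun ⟨hN, _, hpar⟩ => ?_
  have htr : ∀ i < T.ncard + 1, ∃ t ∈ T, ((q j)⁻¹ * q (j + i + 1))⁻¹ * t ∈ C := fun i hi =>
    hTC _ (by simpa using (par_mul_left (q j)⁻¹).2 (hpar i hi))
  choose! t htT htC using htr
  have hcard : hT.toFinset.card < (Finset.range (T.ncard + 1)).card := by
    rw [Finset.card_range, ← Set.ncard_eq_toFinset_card T hT]
    omega
  obtain ⟨a, ha, b, hb, hab, heq⟩ := Finset.exists_ne_map_eq_of_card_lt_of_maps_to hcard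
    (f := t) fun i hi => by simpa using htT i (by simpa using hi)
  rw [Finset.mem_range] at ha hb
  have hC : ∀ a b, a < T.ncard + 1 → b < T.ncard + 1 → t a = t b →
      (q (j + a + 1))⁻¹ * q (j + b + 1) ∈ C := fun a b ha hb heq => by
    have := mul_mem (htC a ha) (inv_mem (htC b hb))
    rw [heq] at this
    simpa [mul_assoc] using this
  rcases lt_or_gt_of_ne hab with hlt | hlt
  · exact hq _ _ (by omega) (by omega) (hC a b ha hb heq)
  · exact hq _ _ (by omega) (by omega) (hC b a hb ha heq.symm)

/-- A step between cosets crossed by the geodesic `γ` starts near `γ` unless it is a short step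
between parallel cosets. -/
theorem VirtCyclicBy.exists_near_or_par (hz : VirtCyclicBy C z) (h : HypMetric (wordDist X) D)
    (hX : IsSymmGen X)
    (hH : ∀ (q : G) (i : Bool), ∃ R,
      QC (wordDist X) R ((H.map (MulAut.conj q⁻¹).toMonoidHom ⊓ A i : Subgroup G) : Set G))
    (r : ℕ) :
    ∃ E K, ∀ γ n, IsGeod (wordDist X) γ n → ∀ q q' p p', ∀ i : Bool,
      Near (wordDist X) r H q → Near (wordDist X) r H q' →
      q⁻¹ * q' ∈ A i → q⁻¹ * p ∈ C → q'⁻¹ * p' ∈ C →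
      p ∈ γ '' Set.Icc 0 n → p' ∈ γ '' Set.Icc 0 n →
      (((H.map (MulAut.conj q⁻¹).toMonoidHom ⊓ C : Subgroup G) : Set G).Finite ∨ q = p) →
      (((H.map (MulAut.conj q'⁻¹).toMonoidHom ⊓ C : Subgroup G) : Set G).Finite ∨ q' = p') →
      Near (wordDist X) E (γ '' Set.Icc 0 n) q ∨ wordDist X q q' ≤ K ∧ Par z q q' := by
  obtain ⟨R, hC⟩ := hz.exists_qc h hX
  obtain ⟨B, hB⟩ := exists_corner h hX hC hH r
  obtain ⟨B', hB'⟩ := hz.exists_corner_of_not_par h hX (B + D)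
  refine ⟨B + B' + 2 * D, B + D, fun γ n hγ q q' p p' i hq hq' hqq hqp hqp' hp hp' hf hf' => ?_⟩
  have near : ∀ e, e ≤ B + B' + D → wordDist X q p + wordDist X q p' ≤ wordDist X p p' + e →
      Near (wordDist X) (B + B' + 2 * D) (γ '' Set.Icc 0 n) q := by
    obtain ⟨s, ⟨-, hs⟩, rfl⟩ := hp
    obtain ⟨t, ⟨-, ht⟩, rfl⟩ := hp'
    intro e he hle
    rw [hX.wordDist_comm q (γ s)] at hle
    obtain ⟨u, hu, hqu⟩ := hγ.exists_near h hs ht hle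
    exact ⟨γ u, ⟨u, ⟨Nat.zero_le _, hu⟩, rfl⟩, by omega⟩
  rcases hf with hf | rfl
  swap
  · exact .inl (h.near_of_mem hp)
  rcases hf' with hf' | rfl
  swap
  · exact .inl (near B (by omega) (hB q hq hf i p q' hqp hqq hq'))
  rcases lt_or_ge (B + D) (wordDist X q q') with hlt | hge
  · have h₁ := hB q hq hf i p q' hqp hqq hq'
    have h₂ := hB q' hq' hf' i p' q hqp' (by simpa using inv_mem hqq) hq
    rw [hX.wordDist_comm q p] at h₁
    rw [hX.wordDist_comm q' q, hX.wordDist_comm p' q, add_comm] at h₂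
    have h₃ := h.excess_of_corners h₁ h₂ hlt
    rw [hX.wordDist_comm p q] at h₃
    exact .inl (near (B + D) (by omega) h₃)
  · by_cases hpar : Par z q q'
    · exact .inr ⟨hge, hpar⟩
    · exact .inl (near B' (by omega) (hB' q q' hge hpar p p' hqp hqp'))

theorem exists_lt_le_le_succ {τ : ℕ → ℕ} {N t : ℕ} (h₀ : τ 0 ≤ t) (hN : 0 < N) (ht : t ≤ τ N) :
    ∃ j < N, τ j ≤ t ∧ t ≤ τ (j + 1) := by
  induction N with
  | zero => omega
  | succ N ih =>
    rcases le_or_gt (τ N) t with hle | hgt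
    · exact ⟨N, N.lt_succ_self, hle, ht⟩
    · rcases N.eq_zero_or_pos with rfl | hN
      · omega
      · obtain ⟨j, hj, hjt⟩ := ih hN hgt.le
        exact ⟨j, by omega, hjt⟩

/-- A subgroup all of whose conjugates meet the factors in quasiconvex subgroups is
quasiconvex. -/
theorem IsAmalgamatedFreeProduct.exists_qc
    (amal : IsAmalgamatedFreeProduct (A true) (A false) C) (hz : VirtCyclicBy C z)
    (h : HypMetric (wordDist X) D) (hX : IsSymmGen X) (hXA : ∀ x ∈ X, ∃ k, x ∈ A k)
    (hfg : H.FG)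
    (hH : ∀ (q : G) (i : Bool), ∃ R,
      QC (wordDist X) R ((H.map (MulAut.conj q⁻¹).toMonoidHom ⊓ A i : Subgroup G) : Set G)) :
    ∃ R, QC (wordDist X) R (H : Set G) := by
  obtain ⟨r₀, hr₀⟩ := hfg.exists_linked hX hXA
  obtain ⟨r₁, hr₁⟩ := hz.exists_near_of_coset hX H r₀
  obtain ⟨E, K, hEK⟩ := hz.exists_near_or_par h hX hH (max r₀ r₁)
  obtain ⟨T, hT, hTC⟩ := hz.exists_finite_par h hX
  set E' := E + (T.ncard + 1) * K with hE'
  obtain ⟨R, hR⟩ := exists_near_of_between (A := A) h hX hH (max r₀ r₁) (4 * E')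
  have key : ∀ g ∈ H, ∀ x, wordDist X 1 x + wordDist X x g = wordDist X 1 g →
      Near (wordDist X) R H x := by
    intro g hg x hx
    have hnear : ∀ y ∈ H, ∀ r, Near (wordDist X) r H y := fun y hy r => h.near_of_mem hy
    by_cases hgC : g ∈ C
    · exact hR 1 (hnear 1 (one_mem H) _) true g x (by simpa using amal.le true hgC)
        (hnear g hg _) (by omega)
    obtain ⟨γ, γ₀, γx, γn, hγ⟩ := hX.geodMetric.exists_isGeod_through hx
    set n := wordDist X 1 g
    set W := γ '' Set.Icc 0 n with hW
    have hlink := linked_of_isGeod hX hXA hγ (Nat.zero_le n) le_rfl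
    rw [γ₀, γn] at hlink
    have hW₁ : 1 ∈ W := ⟨0, ⟨le_rfl, Nat.zero_le n⟩, γ₀⟩
    have hWg : g ∈ W := ⟨n, ⟨Nat.zero_le n, le_rfl⟩, γn⟩
    obtain ⟨N, q₀, p, ι, hN, q₀0, p0, q₀N, pN, hqp, hι, hsep⟩ :=
      amal.exists_seq (hr₀ g hg) hlink (hnear 1 (one_mem H) _) (hnear g hg _) hW₁ hWg hgC
    have hrep : ∀ k, ∃ q, (k ≤ N → Near (wordDist X) (max r₀ r₁) H q ∧ (q₀ k)⁻¹ * q ∈ C ∧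
        (((H.map (MulAut.conj q⁻¹).toMonoidHom ⊓ C : Subgroup G) : Set G).Finite ∨ q = p k)) ∧
        (q₀ k = p k → q = p k) := by
      intro k
      by_cases hfin :
        ((H.map (MulAut.conj (q₀ k)⁻¹).toMonoidHom ⊓ C : Subgroup G) : Set G).Finite
      · exact ⟨q₀ k, fun hk => ⟨(hqp k hk).1.mono (le_max_left _ _), by simp [one_mem],
          .inl hfin⟩, id⟩
      · exact ⟨p k, fun hk => ⟨(hr₁ _ (hqp k hk).1 hfin _ (hqp k hk).2.2).mono
          (le_max_right _ _), (hqp k hk).2.2, .inr rfl⟩, fun _ => rfl⟩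
    choose q hq hq' using hrep
    have q0 : q 0 = 1 := (hq' 0 (by rw [q₀0, p0])).trans p0
    have qN : q N = g := (hq' N (by rw [q₀N, pN])).trans pN
    have hqC : ∀ k ≤ N, (q k)⁻¹ * q₀ k ∈ C := fun k hk => by
      simpa using inv_mem (hq k hk).2.1
    have hqpC : ∀ k ≤ N, (q k)⁻¹ * p k ∈ C := fun k hk => by
      simpa [mul_assoc] using mul_mem (hqC k hk) (hqp k hk).2.2
    have hqι : ∀ k < N, (q k)⁻¹ * q (k + 1) ∈ A (ι k) := fun k hk => by
      have := mul_mem (mul_mem (amal.le (ι k) (hqC k hk.le)) (hι k hk))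
        (amal.le (ι k) (hq (k + 1) hk).2.1)
      simpa [mul_assoc] using this
    have hqsep : ∀ k l, k < l → l ≤ N → (q k)⁻¹ * q l ∉ C := fun k l hkl hl hmem => by
      have := mul_mem (mul_mem (hq k (by omega)).2.1 hmem) (hqC l hl)
      exact hsep k l hkl hl (by simpa [mul_assoc] using this)
    have hclose : ∀ j ≤ N, Near (wordDist X) E' W (q j) := fun j hj =>
      near_of_forall_near_or_par hX hT hTC hqsep (fun k hk => by
        rcases hk.lt_or_eq with hlt | rfl
        · exact (hEK γ n hγ _ _ _ _ (ι k) (hq k hk).1 (hq (k + 1) hlt).1 (hqι k hlt)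
            (hqpC k hk) (hqpC (k + 1) hlt) (hqp k hk).2.1 (hqp (k + 1) hlt).2.1 (hq k hk).2.2
            (hq (k + 1) hlt).2.2).imp_right fun hpar => ⟨hlt, hpar⟩
        · rw [qN]
          exact .inl (h.near_of_mem hWg)) hj
    have hτ : ∀ j, ∃ t, j ≤ N → t ≤ n ∧ wordDist X (q j) (γ t) ≤ E' ∧ (j = 0 → t = 0) ∧
        (j = N → t = n) := by
      intro j
      rcases j.eq_zero_or_pos with rfl | hj₀
      · exact ⟨0, fun _ => ⟨Nat.zero_le n, by simp [q0, γ₀, wordDist_self], fun _ => rfl,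
          fun hN' => by omega⟩⟩
      rcases eq_or_ne j N with rfl | hjN
      · exact ⟨n, fun _ => ⟨le_rfl, by simp [qN, γn, wordDist_self], fun h => by omega,
          fun _ => rfl⟩⟩
      by_cases hj : j ≤ N
      · obtain ⟨_, ⟨t, ⟨-, ht⟩, rfl⟩, hqt⟩ := hclose j hj
        exact ⟨t, fun _ => ⟨ht, hqt, fun h => by omega, fun h => (hjN h).elim⟩⟩
      · exact ⟨0, fun h => (hj h).elim⟩
    choose τ hτ using hτ
    have τ₀ : τ 0 = 0 := (hτ 0 (Nat.zero_le N)).2.2.1 rfl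
    have τN : τ N = n := (hτ N le_rfl).2.2.2 rfl
    have hxn : wordDist X 1 x ≤ n := by omega
    obtain ⟨j, hj, h₁, h₂⟩ := exists_lt_le_le_succ (τ := τ) (t := wordDist X 1 x) (by omega) hN
      (by omega)
    refine hR (q j) (hq j hj.le).1 (ι j) (q (j + 1)) x (hqι j hj) (hq (j + 1) hj).1 ?_
    obtain ⟨ha, ha', -⟩ := hτ j hj.le
    obtain ⟨hb, hb', -⟩ := hτ (j + 1) hj
    have e₁ := hγ _ _ h₁ hxn
    have e₂ := hγ _ _ h₂ hb
    have e₃ := hγ _ _ (h₁.trans h₂) hb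
    rw [γx] at e₁ e₂
    have t₁ := hX.wordDist_triangle (q j) (γ (τ j)) x
    have t₂ := hX.wordDist_triangle x (γ (τ (j + 1))) (q (j + 1))
    have t₃ := hX.wordDist_triangle (γ (τ j)) (q j) (γ (τ (j + 1)))
    have t₄ := hX.wordDist_triangle (q j) (q (j + 1)) (γ (τ (j + 1)))
    rw [hX.wordDist_comm (γ (τ (j + 1)))] at t₂
    rw [hX.wordDist_comm (γ (τ j)) (q j)] at t₃
    omega
  refine ⟨R, fun x hx y hy p hp => ?_⟩
  have := key (x⁻¹ * y) (mul_mem (inv_mem hx) hy) (x⁻¹ * p) ?_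
  · simpa using near_subgroup_mul_left hx this
  · rw [wordDist_mul_left, ← wordDist_mul_left x 1, ← wordDist_mul_left x 1]
    simpa using hp

end Global

/-- **Lemma 3.2.** A finitely generated subgroup of an amalgam of hyperbolic groups along a
virtually cyclic subgroup, all of whose conjugates meet the factors in quasiconvex
subgroups, is word hyperbolic. -/
theorem subgroup_wordHyperbolic_of_conj_inter_quasiconvex {G : Type u} [Group G]
    (A : Bool → Subgroup G) (C : Subgroup G)
    (hG : IsWordHyperbolic G)
    (amal : IsAmalgamatedFreeProduct (A true) (A false) C)
    (hC : IsVirtuallyCyclic ↥C)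
    (H : Subgroup G) (hH : H.FG)
    (hqc : ∀ (g : G) (i : Bool),
      IsQuasiconvex ((H.map (MulAut.conj g⁻¹).toMonoidHom ⊓ A i).subgroupOf (A i))) :
    IsWordHyperbolic ↥H := by
  obtain ⟨X, hX, hXA, D, h⟩ := amal.exists_hypMetric hG fun i =>
    let ⟨_, _, X, hX, _⟩ := hqc 1 i
    ⟨X, hX⟩
  obtain ⟨z, hz⟩ := exists_virtCyclicBy hC
  obtain ⟨R, hR⟩ := hz.exists_qc h hX
  obtain ⟨R', hR'⟩ := amal.exists_qc hz h hX hXA hH fun q i =>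
    (amal.qc_factor hX hXA hR i).exists_qc_of_isQuasiconvex h hX inf_le_right (hqc q i)
  obtain ⟨Y, hY, hYX⟩ := hR'.exists_isSymmGen hX
  obtain ⟨D', h'⟩ := h.exists_hypMetric_of_hom hX hY H.subtype (c := 1)
    fun k => by simpa using hYX k
  exact h'.isWordHyperbolic hY
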